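/- Let G be an Artin group of large type, let g ∈ G and let i ≠ j. Then among the left divisors of g that lie in G(i,j) there is a unique one of maximal word length, denoted LD_{ij}(g); similarly, among the right divisors of g lying in G(i,j) there is a unique one of maximal word length, denoted RD_{ij}(g). Furthermore, if w is any geodesic word representing g and u ∈ G(i,j) is the element represented by the maximal {x_i,x_j}-prefix of w, then there exist a letter a ∈ {x_i^{±1}, x_j^{±1}} and an integer r ≥ 0 such that LD_{ij}(g) = u a^r in G and ℓ(LD_{ij}(g)) = ℓ(u) + r. -/

import Mathlib

namespace ArtinRD

/-- The alternating product `xyxy...` with `m` factors, starting with `x`. -/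
def altProd {G : Type*} [Monoid G] : ℕ → G → G → G
  | 0, _, _ => 1
  | n + 1, x, y => x * altProd n y x

/-- The Artin relators determined by a Coxeter-type matrix `M` (`⊤` meaning `∞`). -/
def artinRels (n : ℕ) (M : Fin n → Fin n → ℕ∞) : Set (FreeGroup (Fin n)) :=
  {r | ∃ i j : Fin n, i ≠ j ∧ ∃ m : ℕ, M i j = (m : ℕ∞) ∧
    r = altProd m (FreeGroup.of i) (FreeGroup.of j) *
        (altProd m (FreeGroup.of j) (FreeGroup.of i))⁻¹}

/-- The Artin group associated to the matrix `M`. -/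
abbrev ArtinGroup (n : ℕ) (M : Fin n → Fin n → ℕ∞) : Type := PresentedGroup (artinRels n M)

/-- The standard generator `x_i` of the Artin group. -/
def gen (n : ℕ) (M : Fin n → Fin n → ℕ∞) (i : Fin n) : ArtinGroup n M := PresentedGroup.of i

/-- The set `A = {x_1^{±1}, ..., x_n^{±1}}` of standard letters. -/
def genSet (n : ℕ) (M : Fin n → Fin n → ℕ∞) : Set (ArtinGroup n M) :=
  {g | ∃ i : Fin n, g = gen n M i ∨ g = (gen n M i)⁻¹}

/-- Word length of `g` with respect to a set `S`: the least `N` such that `g` is a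
product of `N` elements of `S`. -/
noncomputable def wordLength {G : Type*} [Group G] (S : Set G) (g : G) : ℕ :=
  sInf {N : ℕ | ∃ w : List G, (∀ a ∈ w, a ∈ S) ∧ w.length = N ∧ w.prod = g}

/-- The word length on an Artin group with respect to the standard letters. -/
noncomputable def ℓA (n : ℕ) (M : Fin n → Fin n → ℕ∞) : ArtinGroup n M → ℕ :=
  wordLength (genSet n M)

/-- A letter: a generator index together with a sign (`true` = positive). -/
abbrev Letter (n : ℕ) := Fin n × Bool

/-- The group element corresponding to a letter. -/
def toGen (n : ℕ) (M : Fin n → Fin n → ℕ∞) (l : Letter n) : ArtinGroup n M :=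
  if l.2 then gen n M l.1 else (gen n M l.1)⁻¹

/-- The group element represented by a word over the letters. -/
def wordElt (n : ℕ) (M : Fin n → Fin n → ℕ∞) (w : List (Letter n)) : ArtinGroup n M :=
  (w.map (toGen n M)).prod

/-- A word is geodesic if its length equals the word length of the element it represents. -/
def IsGeodesic (n : ℕ) (M : Fin n → Fin n → ℕ∞) (w : List (Letter n)) : Prop :=
  wordLength (genSet n M) (wordElt n M w) = w.length

/-- `h` is a left divisor of `g`: the factorisation `g = h ⬝ (h⁻¹ g)` is geodesic. -/
def IsLeftDiv {G : Type*} [Group G] (ℓ : G → ℕ) (h g : G) : Prop :=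
  ℓ h + ℓ (h⁻¹ * g) = ℓ g

/-- `h` is a right divisor of `g`: the factorisation `g = (g h⁻¹) ⬝ h` is geodesic. -/
def IsRightDiv {G : Type*} [Group G] (ℓ : G → ℕ) (h g : G) : Prop :=
  ℓ (g * h⁻¹) + ℓ h = ℓ g

/-- The two-generator ("dihedral") subgroup `G(i,j)`. -/
def Gij (n : ℕ) (M : Fin n → Fin n → ℕ∞) (i j : Fin n) : Subgroup (ArtinGroup n M) :=
  Subgroup.closure {gen n M i, gen n M j}

/-- The letters `x_i^{±1}, x_j^{±1}` as group elements. -/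
def lettersIJ (n : ℕ) (M : Fin n → Fin n → ℕ∞) (i j : Fin n) : Set (ArtinGroup n M) :=
  {gen n M i, (gen n M i)⁻¹, gen n M j, (gen n M j)⁻¹}

/-- The maximal `{x_i,x_j}`-prefix of a word. -/
def ijPrefix (n : ℕ) (i j : Fin n) (w : List (Letter n)) : List (Letter n) :=
  w.takeWhile (fun l => l.1 == i || l.1 == j)

/-- `h` is a left divisor of `g` lying in `G(i,j)` of maximal word length. -/
def IsMaxLD (n : ℕ) (M : Fin n → Fin n → ℕ∞) (i j : Fin n) (g h : ArtinGroup n M) : Prop :=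
  h ∈ Gij n M i j ∧ IsLeftDiv (ℓA n M) h g ∧
    ∀ h' ∈ Gij n M i j, IsLeftDiv (ℓA n M) h' g → ℓA n M h' ≤ ℓA n M h

/-- `h` is a right divisor of `g` lying in `G(i,j)` of maximal word length. -/
def IsMaxRD (n : ℕ) (M : Fin n → Fin n → ℕ∞) (i j : Fin n) (g h : ArtinGroup n M) : Prop :=
  h ∈ Gij n M i j ∧ IsRightDiv (ℓA n M) h g ∧
    ∀ h' ∈ Gij n M i j, IsRightDiv (ℓA n M) h' g → ℓA n M h' ≤ ℓA n M h

/-! ### Letters and words -/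

/-- Evaluate a letter in a group. -/
def lev {I H : Type} [Group H] (f : I → H) (x : I × Bool) : H := if x.2 then f x.1 else (f x.1)⁻¹

/-- The inverse letter. -/
def linv {I : Type} (x : I × Bool) : I × Bool := (x.1, !x.2)

@[simp] theorem linv_linv {I : Type} (x : I × Bool) : linv (linv x) = x := by simp [linv]
@[simp] theorem linv_fst {I : Type} (x : I × Bool) : (linv x).1 = x.1 := rfl

@[simp] theorem lev_linv {I H : Type} [Group H] (f : I → H) (x : I × Bool) :
    lev f (linv x) = (lev f x)⁻¹ := by
  rcases x with ⟨i, b⟩; cases b <;> simp [lev, linv]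

theorem eq_or_linv {I : Type} {x y : I × Bool} (h : x.1 = y.1) : x = y ∨ x = linv y := by
  rcases x with ⟨i, b⟩; rcases y with ⟨j, c⟩
  simp only at h; subst h
  cases b <;> cases c <;> simp [linv]

/-- Evaluate a word in a group. -/
def wev {I H : Type} [Group H] (f : I → H) (w : List (I × Bool)) : H := (w.map (lev f)).prod

@[simp] theorem wev_nil {I H : Type} [Group H] (f : I → H) : wev f [] = 1 := rfl
@[simp] theorem wev_cons {I H : Type} [Group H] (f : I → H) (x) (w : List (I × Bool)) :
    wev f (x :: w) = lev f x * wev f w := by simp [wev]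
@[simp] theorem wev_append {I H : Type} [Group H] (f : I → H) (u w : List (I × Bool)) :
    wev f (u ++ w) = wev f u * wev f w := by simp [wev]
@[simp] theorem wev_replicate {I H : Type} [Group H] (f : I → H) (r : ℕ) (x : I × Bool) :
    wev f (List.replicate r x) = lev f x ^ r := by simp [wev]

/-- The length axioms of a two-generator Artin group used in the proof. -/
structure IsDih {I D : Type} [Group D] (s : Sym2 I) (f : I → D) (L : D → ℕ) : Prop where
  one : L 1 = 0
  zero : ∀ h, L h = 0 → h = 1
  step : ∀ x h, x.1 ∈ s → L (lev f x * h) = L h + 1 ∨ L h = L (lev f x * h) + 1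
  desc : ∀ h, L h ≠ 0 → ∃ x : I × Bool, x.1 ∈ s ∧ L (lev f x * h) + 1 = L h
  d1 : ∀ x h, x.1 ∈ s → L (lev f x * h) < L h → L h < L ((lev f x)⁻¹ * h)
  d3 : ∀ x x' z : I × Bool, x.1 ∈ s → z.1 ∈ s → x.1 ≠ z.1 → x'.1 = x.1 → ∀ t r : ℕ, 1 ≤ t →
    L (lev f z ^ t * lev f x' ^ r) < L (lev f x * (lev f z ^ t * lev f x' ^ r))

/-- A system of two-generator groups, one for each pair. -/
structure PS (I : Type) where
  D : Sym2 I → Type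
  grp : ∀ s, Group (D s)
  f : ∀ s, I → D s
  L : ∀ s, D s → ℕ
  ax : ∀ s, ¬ s.IsDiag → IsDih s (f s) (L s)

namespace PS
variable {I : Type} (P : PS I)

instance (s : Sym2 I) : Group (P.D s) := P.grp s

/-- `x` is a first letter of `h`. -/
def F (s : Sym2 I) (h : P.D s) (x : I × Bool) : Prop := P.L s ((lev (P.f s) x)⁻¹ * h) < P.L s h

/-- Geodesic words in a two-generator group. -/
def Geo (s : Sym2 I) (u : List (I × Bool)) : Prop :=
  (∀ x ∈ u, x.1 ∈ s) ∧ P.L s (wev (P.f s) u) = u.length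

variable {P} {s : Sym2 I}

theorem L_le (hs : ¬ s.IsDiag) (u : List (I × Bool)) (hu : ∀ x ∈ u, x.1 ∈ s) (h : P.D s) :
    P.L s (wev (P.f s) u * h) ≤ u.length + P.L s h := by
  induction u with
  | nil => simp
  | cons x u ih =>
    have h1 := ih (fun y hy => hu y (by simp [hy]))
    have h2 := (P.ax s hs).step x (wev (P.f s) u * h) (hu x (by simp))
    simp only [wev_cons, mul_assoc, List.length_cons]
    omega

theorem L_le' (hs : ¬ s.IsDiag) (u : List (I × Bool)) (hu : ∀ x ∈ u, x.1 ∈ s) :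
    P.L s (wev (P.f s) u) ≤ u.length := by
  have := L_le (P := P) hs u hu 1
  rw [(P.ax s hs).one] at this
  simpa using this

theorem geo_nil (hs : ¬ s.IsDiag) : P.Geo s [] := ⟨by simp, by simpa using (P.ax s hs).one⟩

theorem geo_cons (hs : ¬ s.IsDiag) (x : I × Bool) (u : List (I × Bool)) :
    P.Geo s (x :: u) ↔ x.1 ∈ s ∧ P.Geo s u ∧ ¬ P.F s (wev (P.f s) u) (linv x) := by
  unfold Geo F
  simp only [lev_linv, inv_inv, wev_cons, List.length_cons]
  constructor
  · rintro ⟨h1, h2⟩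
    have hx := h1 x (by simp)
    have hu : ∀ y ∈ u, y.1 ∈ s := fun y hy => h1 y (by simp [hy])
    have h3 := (P.ax s hs).step x (wev (P.f s) u) hx
    have h4 := L_le' (P := P) hs u hu
    exact ⟨hx, ⟨hu, by omega⟩, by omega⟩
  · rintro ⟨hx, ⟨hu, h2⟩, h3⟩
    have h4 := (P.ax s hs).step x (wev (P.f s) u) hx
    refine ⟨?_, by omega⟩
    intro y hy
    rcases List.mem_cons.1 hy with rfl | hy
    · exact hx
    · exact hu y hy

theorem geo_left (hs : ¬ s.IsDiag) {u v : List (I × Bool)} (h : P.Geo s (u ++ v)) : P.Geo s u := by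
  have hu : ∀ x ∈ u, x.1 ∈ s := fun x hx => h.1 x (by simp [hx])
  have hv : ∀ x ∈ v, x.1 ∈ s := fun x hx => h.1 x (by simp [hx])
  have h1 := L_le (P := P) hs u hu (wev (P.f s) v)
  have h2 := L_le' (P := P) hs v hv
  have h3 := L_le' (P := P) hs u hu
  have h4 := h.2
  rw [wev_append, List.length_append] at h4
  refine ⟨hu, ?_⟩
  have key : ∀ (v : List (I × Bool)), (∀ x ∈ v, x.1 ∈ s) → ∀ u : List (I × Bool),
      (∀ x ∈ u, x.1 ∈ s) → P.L s (wev (P.f s) u * wev (P.f s) v) ≤ P.L s (wev (P.f s) u) + v.length := by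
    intro v hv u hu
    have ex : ∀ N, ∀ h : P.D s, P.L s h = N → ∃ u', (∀ x ∈ u', x.1 ∈ s) ∧ wev (P.f s) u' = h ∧ u'.length = N := by
      intro N
      induction N with
      | zero => intro h hh; exact ⟨[], by simp, by simp [(P.ax s hs).zero h hh], rfl⟩
      | succ N ih =>
        intro h hh
        obtain ⟨x, hx, hL⟩ := (P.ax s hs).desc h (by omega)
        obtain ⟨u', h1, h2, h3⟩ := ih (lev (P.f s) x * h) (by omega)
        refine ⟨linv x :: u', ?_, by simp [h2], by simp [h3]⟩
        intro y hy
        rcases List.mem_cons.1 hy with rfl | hy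
        · exact hx
        · exact h1 y hy
    obtain ⟨u', h1, h2, h3⟩ := ex _ (wev (P.f s) u) rfl
    have := L_le (P := P) hs u' h1 (wev (P.f s) v)
    have h5 := L_le' (P := P) hs v hv
    rw [h2] at this
    omega
  have := key v hv u hu
  omega

theorem exists_geo (hs : ¬ s.IsDiag) (h : P.D s) : ∃ u, P.Geo s u ∧ wev (P.f s) u = h := by
  have ex : ∀ N, ∀ h : P.D s, P.L s h = N → ∃ u', P.Geo s u' ∧ wev (P.f s) u' = h := by
    intro N
    induction N with
    | zero => intro h hh; exact ⟨[], geo_nil hs, by simp [(P.ax s hs).zero h hh]⟩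
    | succ N ih =>
      intro h hh
      obtain ⟨x, hx, hL⟩ := (P.ax s hs).desc h (by omega)
      obtain ⟨u', h1, h2⟩ := ih (lev (P.f s) x * h) (by omega)
      refine ⟨linv x :: u', ?_, by simp [h2]⟩
      rw [geo_cons hs]
      refine ⟨hx, h1, ?_⟩
      unfold F
      rw [h2]
      simp only [linv_linv, inv_mul_cancel_left]
      omega
  exact ex _ h rfl

theorem F_of_geo (hs : ¬ s.IsDiag) {x : I × Bool} {u : List (I × Bool)} (h : P.Geo s (x :: u)) :
    P.F s (wev (P.f s) (x :: u)) x := by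
  have h1 := ((geo_cons hs x u).1 h).2.1.2
  have h2 := h.2
  unfold F
  rw [h2]
  simp [h1]

theorem exists_geo_of_F (hs : ¬ s.IsDiag) {x : I × Bool} {h : P.D s} (hx : x.1 ∈ s) (hF : P.F s h x) :
    ∃ u, P.Geo s (x :: u) ∧ wev (P.f s) (x :: u) = h := by
  obtain ⟨u, h1, h2⟩ := exists_geo hs ((lev (P.f s) x)⁻¹ * h)
  refine ⟨u, ?_, by simp [h2]⟩
  rw [geo_cons hs]
  refine ⟨hx, h1, ?_⟩
  unfold F at *
  rw [h2]
  simp only [lev_linv, inv_inv, mul_inv_cancel_left]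
  omega

theorem not_F_both (hs : ¬ s.IsDiag) {x : I × Bool} {h : P.D s} (hx : x.1 ∈ s) (h1 : P.F s h x)
    (h2 : P.F s h (linv x)) : False := by
  unfold F at *
  have := (P.ax s hs).d1 (linv x) h hx (by simpa using h1)
  simp at this h2
  omega

theorem ne_one_of_F (hs : ¬ s.IsDiag) {x : I × Bool} {h : P.D s} (h1 : P.F s h x) : h ≠ 1 := by
  rintro rfl
  unfold F at h1
  rw [(P.ax s hs).one] at h1
  omega

theorem exists_F (hs : ¬ s.IsDiag) {h : P.D s} (h1 : h ≠ 1) : ∃ x : I × Bool, x.1 ∈ s ∧ P.F s h x := by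
  obtain ⟨x, hx, hL⟩ := (P.ax s hs).desc h (fun h0 => h1 ((P.ax s hs).zero h h0))
  refine ⟨linv x, hx, ?_⟩
  unfold F
  simp only [lev_linv, inv_inv]
  omega

theorem geo_of_eq {u v : List (I × Bool)} (hu : P.Geo s u) (hv : ∀ x ∈ v, x.1 ∈ s)
    (hl : v.length = u.length) (he : wev (P.f s) u = wev (P.f s) v) : P.Geo s v :=
  ⟨hv, by rw [← he, hu.2, hl]⟩

/-! ### Length preserving equivalence of words -/

variable (P)

/-- Equivalence generated by exchanging geodesic two-generator subwords. -/
inductive Eqv : List (I × Bool) → List (I × Bool) → Prop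
  | refl (w) : Eqv w w
  | swap (s : Sym2 I) (u v w) (hs : ¬ s.IsDiag) (hu : P.Geo s u) (hv : P.Geo s v)
      (h : wev (P.f s) u = wev (P.f s) v) : Eqv (u ++ w) (v ++ w)
  | cons (a) (u v) (h : Eqv u v) : Eqv (a :: u) (a :: v)
  | trans (u v w) (h : Eqv u v) (h' : Eqv v w) : Eqv u w

variable {P}

theorem Eqv.symm {u v : List (I × Bool)} (h : P.Eqv u v) : P.Eqv v u := by
  induction h with
  | refl w => exact .refl w
  | swap s u v w hs hu hv h => exact .swap s v u w hs hv hu h.symm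
  | cons a u v h ih => exact .cons a _ _ ih
  | trans u v w h h' ih ih' => exact .trans _ _ _ ih' ih

theorem Eqv.tr {u v w : List (I × Bool)} (h : P.Eqv u v) (h' : P.Eqv v w) : P.Eqv u w :=
  .trans _ _ _ h h'

theorem Eqv.length {u v : List (I × Bool)} (h : P.Eqv u v) : u.length = v.length := by
  induction h with
  | refl w => rfl
  | swap s u v w hs hu hv h => simp [← hu.2, ← hv.2, h]
  | cons a u v h ih => simp [ih]
  | trans u v w h h' ih ih' => omega

theorem Eqv.app (p : List (I × Bool)) {u v : List (I × Bool)} (h : P.Eqv u v) :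
    P.Eqv (p ++ u) (p ++ v) := by
  induction p with
  | nil => exact h
  | cons a p ih => exact .cons a _ _ ih

variable (P)

/-- Some equivalent word starts with `x`. -/
def Starts (w : List (I × Bool)) (x : I × Bool) : Prop := ∃ v, P.Eqv w (x :: v)

/-- Reduced words. -/
def Red : List (I × Bool) → Prop
  | [] => True
  | a :: v => Red v ∧ ¬ P.Starts v (linv a)

/-- No equivalent word starts with a letter from `s`. -/
def Free (s : Sym2 I) (w : List (I × Bool)) : Prop := ∀ x : I × Bool, x.1 ∈ s → ¬ P.Starts w x

/-- The decomposition of a word with respect to a pair. -/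
def Gate (s : Sym2 I) (w : List (I × Bool)) (h : P.D s) (w0 : List (I × Bool)) : Prop :=
  ∃ u, P.Geo s u ∧ wev (P.f s) u = h ∧ P.Eqv w (u ++ w0) ∧ P.Free s w0

variable {P}

theorem starts_congr {w w' : List (I × Bool)} (h : P.Eqv w w') {x} (hx : P.Starts w x) : P.Starts w' x := by
  obtain ⟨v, hv⟩ := hx
  exact ⟨v, h.symm.tr hv⟩

theorem starts_cons (x) (w : List (I × Bool)) : P.Starts (x :: w) x := ⟨w, .refl _⟩

theorem free_congr {w w' : List (I × Bool)} (h : P.Eqv w w') (hw : P.Free s w) : P.Free s w' :=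
  fun x hx hS => hw x hx (starts_congr h.symm hS)

theorem gate_congr {w w' w0 w0' : List (I × Bool)} {h : P.D s} (e : P.Eqv w w') (e0 : P.Eqv w0 w0')
    (hG : P.Gate s w h w0) : P.Gate s w' h w0' := by
  obtain ⟨u, h1, h2, h3, h4⟩ := hG
  exact ⟨u, h1, h2, e.symm.tr (h3.tr (e0.app u)), free_congr e0 h4⟩

theorem gate_eqv {w w' w0 : List (I × Bool)} {h : P.D s} (hs : ¬ s.IsDiag) (h1 : P.Gate s w h w0)
    (h2 : P.Gate s w' h w0) : P.Eqv w w' := by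
  obtain ⟨u, a1, a2, a3, a4⟩ := h1
  obtain ⟨v, b1, b2, b3, b4⟩ := h2
  exact a3.tr ((Eqv.swap s u v w0 hs a1 b1 (a2.trans b2.symm)).tr b3.symm)

theorem red_suffix {u v : List (I × Bool)} (h : P.Red (u ++ v)) : P.Red v := by
  induction u with
  | nil => exact h
  | cons a u ih => exact ih h.1

variable (P)

/-- The inductive package. -/
structure H (N : ℕ) : Prop where
  C : ∀ w w', w.length ≤ N → P.Red w → P.Eqv w w' → P.Red w'
  G : ∀ s u v, ¬ s.IsDiag → (u ++ v).length ≤ N → P.Red (u ++ v) → (∀ x ∈ u, x.1 ∈ s) → P.Geo s u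
  U : ∀ s w h w0 h' w0', ¬ s.IsDiag → w.length ≤ N → P.Red w → P.Gate s w h w0 →
    P.Gate s w h' w0' → h = h' ∧ P.Eqv w0 w0'

variable {P} {N : ℕ}

theorem gate_exists (hN : P.H N) (hs : ¬ s.IsDiag) (w) (hl : w.length ≤ N) (hw : P.Red w) :
    ∃ h w0, P.Gate s w h w0 := by
  by_cases hf : P.Free s w
  · exact ⟨1, w, [], geo_nil hs, by simp, .refl _, hf⟩
  · unfold Free at hf
    push Not at hf
    obtain ⟨x, hx, w', hw'⟩ := hf
    have hlen := hw'.length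
    simp only [List.length_cons] at hlen
    have hr := hN.C _ _ hl hw hw'
    obtain ⟨h, w0, u, h1, h2, h3, h4⟩ := gate_exists hN hs w' (by omega) hr.1
    have e2 : P.Eqv w ((x :: u) ++ w0) := hw'.tr (.cons _ _ _ h3)
    have hr2 := hN.C _ _ hl hw e2
    refine ⟨_, w0, x :: u, hN.G s (x :: u) w0 hs (by rw [← e2.length]; exact hl) hr2 ?_, rfl, e2, h4⟩
    intro y hy
    rcases List.mem_cons.1 hy with rfl | hy
    · exact hx
    · exact h1.1 y hy
termination_by w.length
decreasing_by simp only [List.length_cons] at hlen; omega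

theorem gate_app (hN : P.H N) (hs : ¬ s.IsDiag) (p w : List (I × Bool)) (hl : (p ++ w).length ≤ N)
    (hr : P.Red (p ++ w)) (hp : ∀ x ∈ p, x.1 ∈ s) {h : P.D s} {w0} (hG : P.Gate s w h w0) :
    P.Gate s (p ++ w) (wev (P.f s) p * h) w0 := by
  obtain ⟨u, h1, h2, h3, h4⟩ := hG
  have e : P.Eqv (p ++ w) ((p ++ u) ++ w0) := by
    rw [List.append_assoc]; exact h3.app p
  refine ⟨p ++ u, hN.G s (p ++ u) w0 hs (by rw [← e.length]; exact hl) (hN.C _ _ hl hr e) ?_,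
    by simp [h2], e, h4⟩
  intro y hy
  rcases List.mem_append.1 hy with hy | hy
  · exact hp y hy
  · exact h1.1 y hy

theorem starts_of_F (hs : ¬ s.IsDiag) {w w0 : List (I × Bool)} {h : P.D s} (hG : P.Gate s w h w0)
    {x : I × Bool} (hx : x.1 ∈ s) (hF : P.F s h x) : P.Starts w x := by
  obtain ⟨u, h1, h2, h3, h4⟩ := hG
  obtain ⟨u', h5, h6⟩ := exists_geo_of_F hs hx hF
  exact ⟨u' ++ w0, h3.tr (Eqv.swap s u (x :: u') w0 hs h1 h5 (h2.trans h6.symm))⟩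

theorem F_of_starts (hN : P.H N) (hs : ¬ s.IsDiag) {w w0 : List (I × Bool)} (hl : w.length ≤ N)
    (hr : P.Red w) {h : P.D s} (hG : P.Gate s w h w0)
    {x : I × Bool} (hx : x.1 ∈ s) (hS : P.Starts w x) : P.F s h x := by
  obtain ⟨w', e⟩ := hS
  have hlen := e.length
  simp only [List.length_cons] at hlen
  have hr' := hN.C _ _ hl hr e
  obtain ⟨h', w0', u, h1, h2, h3, h4⟩ := gate_exists hN hs w' (by omega) hr'.1
  have e2 : P.Eqv w ((x :: u) ++ w0') := e.tr (.cons _ _ _ h3)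
  have hr2 := hN.C _ _ hl hr e2
  have hg : P.Geo s (x :: u) := by
    refine hN.G s (x :: u) w0' hs (by rw [← e2.length]; exact hl) hr2 ?_
    intro y hy
    rcases List.mem_cons.1 hy with rfl | hy
    · exact hx
    · exact h1.1 y hy
  have := (hN.U s w h w0 _ _ hs hl hr hG ⟨x :: u, hg, rfl, e2, h4⟩).1
  rw [this]
  exact F_of_geo hs hg

/-- If `w` is equivalent to `p ++ w'`, the decompositions are related. -/
theorem gate_strip (hN : P.H N) (hs : ¬ s.IsDiag) {w p w' : List (I × Bool)} (hl : w.length ≤ N)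
    (hr : P.Red w) (e : P.Eqv w (p ++ w')) (hp : ∀ x ∈ p, x.1 ∈ s) {h : P.D s} {w0}
    (hG : P.Gate s w h w0) : ∃ k, h = wev (P.f s) p * k ∧ P.Gate s w' k w0 := by
  have hr' := hN.C _ _ hl hr e
  have hlen := e.length
  obtain ⟨k, w1, hk⟩ := gate_exists hN hs w' (by simp at hlen; omega) (red_suffix hr')
  have := gate_app hN hs p w' (by omega) hr' hp hk
  obtain ⟨h1, h2⟩ := hN.U s w h w0 _ _ hs hl hr hG (gate_congr e.symm (.refl _) this)
  exact ⟨k, h1, gate_congr (.refl _) h2.symm hk⟩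

theorem nd {x y : I} (h : x ≠ y) : ¬ (s(x, y)).IsDiag := by simpa using h

/-- Strip off a maximal power of a letter. -/
theorem strip (hN : P.H N) (x : I × Bool) (q : List (I × Bool)) (hl : q.length ≤ N) (hr : P.Red q)
    (hx : ¬ P.Starts q (linv x)) : ∃ r q', P.Eqv q (List.replicate r x ++ q') ∧ P.Red q' ∧
      q'.length + r = q.length ∧ ¬ P.Starts q' x ∧ ¬ P.Starts q' (linv x) := by
  by_cases h : P.Starts q x
  · obtain ⟨q1, e⟩ := h
    have hlen := e.length
    simp only [List.length_cons] at hlen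
    have hr1 := hN.C _ _ hl hr e
    obtain ⟨r, q', h1, h2, h3, h4⟩ := strip hN x q1 (by omega) hr1.1 hr1.2
    exact ⟨r + 1, q', e.tr (by simpa [List.replicate_succ] using Eqv.cons x _ _ h1), h2, by omega, h4⟩
  · exact ⟨0, q, .refl _, hr, rfl, h, hx⟩
termination_by q.length
decreasing_by simp only [List.length_cons] at hlen; omega


end PS

namespace PS
variable {I : Type} {P : PS I} {s : Sym2 I} {N : ℕ}

theorem starts_other {x z : I} (hxz : x ≠ z) {q q0 : List (I × Bool)} {k : P.D s(x, z)}
    (hG : P.Gate s(x, z) q k q0) (hk : k ≠ 1) {ε : Bool} (h1 : ¬ P.Starts q (x, ε))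
    (h2 : ¬ P.Starts q (linv (x, ε))) : ∃ b, P.Starts q (z, b) := by
  obtain ⟨⟨c, b⟩, hc, hF⟩ := exists_F (nd hxz) hk
  have hS := starts_of_F (nd hxz) hG hc hF
  rcases Sym2.mem_iff.1 hc with h | h
  · rcases eq_or_linv (x := (c, b)) (y := (x, ε)) h with h' | h'
    · rw [h'] at hS; exact absurd hS h1
    · rw [h'] at hS; exact absurd hS h2
  · simp only at h; subst h; exact ⟨b, hS⟩

theorem not_F_pow {x z : I} (hxz : x ≠ z) (ζ ε ε' : Bool) (t r : ℕ) (ht : 1 ≤ t) :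
    ¬ P.F s(x, z) (lev (P.f s(x, z)) (z, ζ) ^ t * lev (P.f s(x, z)) (x, ε) ^ r) (x, ε') := by
  intro h
  have := (P.ax _ (nd hxz)).d3 (linv (x, ε')) (x, ε) (z, ζ) (by simp) (by simp) hxz rfl t r ht
  rw [lev_linv] at this
  unfold F at h
  omega

theorem not_starts_linv (hN : P.H N) {x z : I} (hxz : x ≠ z) {q : List (I × Bool)} (hl : q.length ≤ N)
    (hr : P.Red q) {ε : Bool} (h : P.Starts q (x, ε)) : ¬ P.Starts q (linv (x, ε)) := by
  intro h2
  obtain ⟨k, q0, hG⟩ := gate_exists hN (nd hxz) q hl hr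
  exact not_F_both (nd hxz) (x := (x, ε)) (by simp)
    (F_of_starts hN (nd hxz) hl hr hG (by simp) h) (F_of_starts hN (nd hxz) hl hr hG (by simp) h2)

theorem descent (hN : P.H N) (q : List (I × Bool)) (x y z : I) (hxy : x ≠ y) (hxz : x ≠ z) (hyz : y ≠ z)
    (hl : q.length ≤ N) (hr : P.Red q) (ε δ : Bool) (hx : P.Starts q (x, ε)) (hy : P.Starts q (y, δ))
    (k : P.D s(x, z)) (q0) (hk : P.Gate s(x, z) q k q0) (ζ ε' : Bool) (t : ℕ) (ht : 1 ≤ t)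
    (hF : P.F s(x, z) (lev (P.f s(x, z)) (z, ζ) ^ t * k) (x, ε')) : False := by
  obtain ⟨r, q', e, hr', hlen, n1, n2⟩ := strip hN (x, ε) q hl hr (not_starts_linv hN hxz hl hr hx)
  have hr1 : 1 ≤ r := by
    rcases Nat.eq_zero_or_pos r with rfl | h
    · exact absurd (starts_congr e hx) n1
    · exact h
  obtain ⟨k2, hk2, hGk2⟩ := gate_strip hN (nd hxz) hl hr e
    (by intro u hu; rw [List.eq_of_mem_replicate hu]; simp) hk
  rw [wev_replicate] at hk2
  have hk2' : k2 ≠ 1 := by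
    rintro rfl
    rw [hk2, mul_one] at hF
    exact not_F_pow hxz _ _ _ _ _ ht hF
  obtain ⟨b, hb⟩ := starts_other hxz hGk2 hk2' n1 n2
  have hyx : y ≠ x := hxy.symm
  obtain ⟨g, w0, hg⟩ := gate_exists hN (nd hyx) q hl hr
  have Fy := F_of_starts hN (nd hyx) hl hr hg (by simp) hy
  obtain ⟨g1, hg1, hGg1⟩ := gate_strip hN (nd hyx) hl hr e
    (by intro u hu; rw [List.eq_of_mem_replicate hu]; simp) hg
  rw [wev_replicate] at hg1
  have hg1' : g1 ≠ 1 := by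
    rintro rfl
    rw [hg1] at Fy
    exact not_F_pow hyx _ true _ _ 0 hr1 (by simpa using Fy)
  obtain ⟨d, hd⟩ : ∃ d, P.Starts q' (y, d) := by
    have hsw : s(y, x) = s(x, y) := Sym2.eq_swap
    clear hg1
    revert g1
    rw [hsw]
    intro g1 h3 h4
    exact starts_other hxy h3 h4 n1 n2
  rw [hg1] at Fy
  exact descent hN q' y z x hyz hyx hxz.symm (by omega) hr' d b hd hb g1 w0 hGg1 ε δ r hr1 Fy
termination_by q.length

/-- No three distinct first letters. -/
theorem no_three (hN : P.H N) (v : List (I × Bool)) (a b c : I) (ε : Bool) (hab : a ≠ b) (hbc : b ≠ c)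
    (hac : a ≠ c) (hl : v.length ≤ N) (hr : P.Red ((b, ε) :: v)) (h : P.D s(a, b)) (v0)
    (hG : P.Gate s(a, b) v h v0) (h' : P.D s(c, b)) (v0') (hG' : P.Gate s(c, b) v h' v0') (α γ : Bool)
    (hF : P.F s(a, b) (lev (P.f s(a, b)) (b, ε) * h) (a, α))
    (hF' : P.F s(c, b) (lev (P.f s(c, b)) (b, ε) * h') (c, γ)) : False := by
  obtain ⟨r, q, e, hrq, hlen, n1, n2⟩ := strip hN (b, ε) v hl hr.1 hr.2
  have key : ∀ (a : I) (hab : a ≠ b) (α : Bool) (h : P.D s(a, b)) (v0) (hG : P.Gate s(a, b) v h v0)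
      (hF : P.F s(a, b) (lev (P.f s(a, b)) (b, ε) * h) (a, α)),
      ∃ k, P.Gate s(a, b) q k v0 ∧ P.F s(a, b) (lev (P.f s(a, b)) (b, ε) ^ (r + 1) * k) (a, α) ∧
        ∃ d, P.Starts q (a, d) := by
    intro a hab α h v0 hG hF
    obtain ⟨k, hk, hGk⟩ := gate_strip hN (nd hab) hl hr.1 e
      (by intro u hu; rw [List.eq_of_mem_replicate hu]; simp) hG
    rw [wev_replicate] at hk
    rw [hk, ← mul_assoc, ← pow_succ'] at hF
    refine ⟨k, hGk, hF, ?_⟩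
    have hk1 : k ≠ 1 := by
      rintro rfl
      exact not_F_pow hab ε true α (r + 1) 0 (by omega) (by simpa using hF)
    clear hk hF
    have hsw : s(a, b) = s(b, a) := Sym2.eq_swap
    revert k
    rw [hsw]
    intro k h3 h4
    exact starts_other hab.symm h3 h4 n1 n2
  obtain ⟨k, hk, hFk, d, hd⟩ := key a hab α h v0 hG hF
  obtain ⟨k', hk', hFk', d', hd'⟩ := key c hbc.symm γ h' v0' hG' hF'
  exact descent hN q a c b hac hab hbc.symm (by omega) hrq d d' hd hd' k v0 hk ε α (r + 1) (by omega) hFk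

/-- Adding a geodesic two-generator word to a free word keeps it reduced. -/
theorem red_geo_app (hN : P.H N) (hs : ¬ s.IsDiag) (v0 : List (I × Bool)) (hr : P.Red v0)
    (hf : P.Free s v0) (u : List (I × Bool)) (hu : P.Geo s u) (hl : (u ++ v0).length ≤ N + 1) :
    P.Red (u ++ v0) := by
  induction u with
  | nil => exact hr
  | cons c u ih =>
    obtain ⟨h1, h2, h3⟩ := (geo_cons hs c u).1 hu
    simp only [List.cons_append, List.length_cons] at hl
    have hr1 := ih h2 (by omega)
    refine ⟨hr1, fun hS => h3 ?_⟩
    exact F_of_starts hN hs (by omega) hr1 ⟨u, h2, rfl, .refl _, hf⟩ h1 hS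

/-- Geodesicity of the decomposition after adding a letter. -/
theorem geo_cons_of_red (hN : P.H N) (hs : ¬ s.IsDiag) {a : I × Bool} {p v : List (I × Bool)}
    (hl : (p ++ v).length ≤ N) (hr : P.Red (a :: (p ++ v))) (hp : ∀ x ∈ a :: p, x.1 ∈ s) {k : P.D s} {v0}
    {u : List (I × Bool)} (hu : P.Geo s u) (huk : wev (P.f s) u = k) (hG : P.Gate s v k v0) :
    P.Geo s (a :: (p ++ u)) := by
  have hG1 := gate_app hN hs p v hl hr.1 (fun x hx => hp x (by simp [hx])) hG
  have hF : ¬ P.F s (wev (P.f s) p * k) (linv a) := fun hF =>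
    hr.2 (starts_of_F hs hG1 (hp a (by simp)) hF)
  obtain ⟨u', a1, a2, a3, a4⟩ := hG
  have e : P.Eqv (p ++ v) ((p ++ u) ++ v0) := by
    rw [List.append_assoc]
    exact (a3.tr (.swap s u' u v0 hs a1 hu (a2.trans huk.symm))).app p
  have g1 : P.Geo s (p ++ u) := hN.G s (p ++ u) v0 hs (by rw [← e.length]; exact hl) (hN.C _ _ hl hr.1 e) (by
    intro y hy
    rcases List.mem_append.1 hy with hy | hy
    · exact hp y (by simp [hy])
    · exact hu.1 y hy)
  rw [geo_cons hs]
  exact ⟨hp a (by simp), g1, by simpa [huk] using hF⟩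

variable (P)

/-- One-step description of the equivalence. -/
def Ap (w w' : List (I × Bool)) : Prop :=
  w = w' ∨ ∃ a v b v', w = a :: v ∧ w' = b :: v' ∧ ((a = b ∧ P.Eqv v v') ∨
    (a.1 ≠ b.1 ∧ ∃ h h' w0, P.Gate s(a.1, b.1) v h w0 ∧ P.Gate s(a.1, b.1) v' h' w0 ∧
      lev (P.f s(a.1, b.1)) a * h = lev (P.f s(a.1, b.1)) b * h'))

variable {P}

theorem F_of_red (hN : P.H N) (hs : ¬ s.IsDiag) {a : I × Bool} (ha : a.1 ∈ s) {v v0 : List (I × Bool)}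
    (hl : v.length ≤ N) (hr : P.Red (a :: v)) {k : P.D s} (hG : P.Gate s v k v0) :
    P.F s (lev (P.f s) a * k) a := by
  have hG' := hG
  obtain ⟨u, h1, h2, h3, h4⟩ := hG
  have := geo_cons_of_red (p := []) hN hs hl hr (by simpa using ha) h1 h2 hG'
  have := F_of_geo hs this
  simpa [h2] using this

theorem ap_trans (hN : P.H N) {w1 w2 w3 : List (I × Bool)} (l1 : w1.length ≤ N + 1)
    (l2 : w2.length ≤ N + 1) (l3 : w3.length ≤ N + 1) (r1 : P.Red w1) (r2 : P.Red w2) (r3 : P.Red w3)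
    (h12 : P.Ap w1 w2) (h23 : P.Ap w2 w3) : P.Ap w1 w3 := by
  rcases h12 with rfl | ⟨a, v, b, v', rfl, rfl, h12⟩
  · exact h23
  rcases h23 with rfl | ⟨b', v1, c, v'', hbb, rfl, h23⟩
  · exact Or.inr ⟨a, v, b, v', rfl, rfl, h12⟩
  simp only [List.cons.injEq] at hbb
  obtain ⟨rfl, rfl⟩ := hbb
  simp only [List.length_cons, Nat.add_le_add_iff_right] at l1 l2 l3
  rcases h12 with ⟨rfl, e12⟩ | ⟨hab, h, h', w0, g1, g2, hh⟩
  · rcases h23 with ⟨rfl, e23⟩ | ⟨hbc, h, h', w0, g1, g2, hh⟩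
    · exact Or.inr ⟨_, _, _, _, rfl, rfl, Or.inl ⟨rfl, e12.tr e23⟩⟩
    · exact Or.inr ⟨_, _, _, _, rfl, rfl, Or.inr ⟨hbc, h, h', w0, gate_congr e12.symm (.refl _) g1, g2, hh⟩⟩
  · rcases h23 with ⟨rfl, e23⟩ | ⟨hbc, k, k', w0', g1', g2', hk⟩
    · exact Or.inr ⟨_, _, _, _, rfl, rfl, Or.inr ⟨hab, h, h', w0, g1, gate_congr e23 (.refl _) g2, hh⟩⟩
    · have F1 := F_of_red hN (nd hab) (by simp) l1 r1 g1
      have F2 := F_of_red hN (nd hbc) (by simp) l3 r3 g2'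
      rw [hh] at F1
      rw [← hk] at F2
      obtain ⟨a, α⟩ := a
      obtain ⟨b, β⟩ := b
      obtain ⟨c, γ⟩ := c
      simp only at *
      by_cases hac : a = c
      · subst hac
        have hsw : s(b, a) = s(a, b) := Sym2.eq_swap
        revert k k'
        rw [hsw]
        intro k k' g1' g2' hk F2
        obtain ⟨e1, e2⟩ := hN.U _ _ _ _ _ _ (nd hab) l2 r2.1 g2 g1'
        subst e1
        rcases eq_or_linv (x := (a, γ)) (y := (a, α)) rfl with h1 | h1
        · rw [h1] at hk ⊢
          refine Or.inr ⟨_, _, _, _, rfl, rfl, Or.inl ⟨rfl, ?_⟩⟩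
          have : h = k' := mul_left_cancel (hh.trans hk)
          subst this
          exact gate_eqv (nd hab) g1 (gate_congr (.refl _) e2.symm g2')
        · rw [h1] at F2
          exact (not_F_both (nd hab) (by simp) F1 F2).elim
      · exfalso
        have hsw : s(b, c) = s(c, b) := Sym2.eq_swap
        revert k k'
        rw [hsw]
        intro k k' g1' g2' hk F2
        exact no_three hN v' a b c β hab hbc hac l2 r2 h' w0 g2 k w0' g1' α γ F1 F2

theorem key_step (hN : P.H N) {w w' : List (I × Bool)} (e : P.Eqv w w') (hl : w.length ≤ N + 1)
    (hr : P.Red w) : P.Red w' ∧ P.Ap w w' := by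
  induction e with
  | refl w => exact ⟨hr, Or.inl rfl⟩
  | cons a u v h ih =>
    simp only [List.length_cons, Nat.add_le_add_iff_right] at hl
    exact ⟨⟨hN.C _ _ hl hr.1 h, fun hS => hr.2 (starts_congr h.symm hS)⟩,
      Or.inr ⟨_, _, _, _, rfl, rfl, Or.inl ⟨rfl, h⟩⟩⟩
  | trans u v w h h' ih ih' =>
    obtain ⟨a1, a2⟩ := ih hl hr
    have hv : v.length ≤ N + 1 := by rw [← h.length]; exact hl
    obtain ⟨b1, b2⟩ := ih' hv a1
    exact ⟨b1, ap_trans hN hl hv (by rw [← h'.length]; exact hv) hr a1 b1 a2 b2⟩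
  | swap s p q v hs hp hq h =>
    have hlen : p.length = q.length := by rw [← hp.2, ← hq.2, h]
    match p, q, hlen with
    | [], [], _ => exact ⟨hr, Or.inl rfl⟩
    | a :: p, b :: q, hlen =>
      simp only [List.cons_append, List.length_cons, Nat.add_le_add_iff_right] at hl hr hlen ⊢
      obtain ⟨k, v0, hG⟩ := gate_exists hN hs v (by simp at hl; omega) (red_suffix hr.1)
      have hG' := hG
      obtain ⟨u, u1, u2, u3, u4⟩ := hG'
      have g1 := geo_cons_of_red hN hs hl hr hp.1 u1 u2 hG
      have g2 : P.Geo s ((b :: q) ++ u) := by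
        refine geo_of_eq g1 ?_ (by simp; omega) ?_
        · intro x hx
          rcases List.mem_append.1 hx with hx | hx
          · exact hq.1 x hx
          · exact u1.1 x hx
        · simp only [wev_cons, wev_append] at h ⊢
          rw [← mul_assoc, h]
      have lv : (u ++ v0).length = v.length := u3.length.symm
      have lq : (q ++ v).length ≤ N := by simp at hl ⊢; omega
      have rv0 : P.Red v0 := red_suffix (hN.C _ _ (by simp at hl; omega) (red_suffix hr.1) u3)
      have r2 := red_geo_app hN hs v0 rv0 u4 _ g2 (by simp at lv lq ⊢; omega)
      rw [List.append_assoc, List.cons_append] at r2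
      have e3 : P.Eqv (q ++ v) (q ++ (u ++ v0)) := u3.app q
      have r3 : P.Red (q ++ v) := hN.C _ _ (by rw [← e3.length]; exact lq) r2.1 e3.symm
      refine ⟨⟨r3, fun hS => r2.2 (starts_congr e3 hS)⟩, Or.inr ⟨_, _, _, _, rfl, rfl, ?_⟩⟩
      have hp' := (geo_cons hs a p).1 hp
      have hq' := (geo_cons hs b q).1 hq
      have Fa := F_of_geo hs hp
      have Fb := F_of_geo hs hq
      rw [h] at Fa
      by_cases hab : a.1 = b.1
      · left
        rcases eq_or_linv hab with hab | hab
        · subst hab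
          refine ⟨rfl, .swap s p q v hs hp'.2.1 hq'.2.1 ?_⟩
          simpa using h
        · rw [hab] at Fa
          exact (not_F_both hs hq'.1 Fb Fa).elim
      · right
        refine ⟨hab, ?_⟩
        have hss : s = s(a.1, b.1) := ((Sym2.mem_and_mem_iff hab).1 ⟨hp'.1, hq'.1⟩)
        subst hss
        refine ⟨_, _, v0, gate_app hN hs p v hl hr.1 hp'.2.1.1 hG, gate_app hN hs q v lq r3 hq'.2.1.1 hG, ?_⟩
        simp only [wev_cons] at h
        rw [← mul_assoc, h, mul_assoc]

theorem H_zero : P.H 0 := by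
  constructor
  · intro w w' hl hr e
    have h1 := e.length
    have : w' = [] := List.length_eq_zero_iff.1 (by omega)
    subst this; trivial
  · intro s u v hs hl hr hu
    have : u = [] := List.length_eq_zero_iff.1 (by simp at hl ⊢; exact hl.1)
    subst this; exact geo_nil hs
  · intro s w h w0 h' w0' hs hl hr g g'
    obtain ⟨u, a1, a2, a3, a4⟩ := g
    obtain ⟨u', b1, b2, b3, b4⟩ := g'
    have h1 := a3.length
    have h2 := b3.length
    have e1 : u ++ w0 = [] := List.length_eq_zero_iff.1 (by omega)
    have e2 : u' ++ w0' = [] := List.length_eq_zero_iff.1 (by omega)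
    simp only [List.append_eq_nil_iff] at e1 e2
    obtain ⟨rfl, rfl⟩ := e1
    obtain ⟨rfl, rfl⟩ := e2
    exact ⟨a2.symm.trans b2, .refl _⟩

theorem H_succ (hN : P.H N) : P.H (N + 1) := by
  constructor
  · intro w w' hl hr e
    exact (key_step hN e hl hr).1
  · intro s u v hs hl hr hu
    cases u with
    | nil => exact geo_nil hs
    | cons a u =>
      simp only [List.cons_append, List.length_cons, Nat.add_le_add_iff_right] at hl hr
      obtain ⟨k, v0, hG⟩ := gate_exists hN hs v (by simp at hl; omega) (red_suffix hr.1)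
      have hG' := hG
      obtain ⟨u', u1, u2, u3, u4⟩ := hG'
      have := geo_cons_of_red hN hs hl hr hu u1 u2 hG
      exact geo_left hs (u := a :: u) (v := u') this
  · intro s w h w0 h' w0' hs hl hr g g'
    obtain ⟨u, a1, a2, a3, a4⟩ := g
    obtain ⟨u', b1, b2, b3, b4⟩ := g'
    have e := a3.symm.tr b3
    match u, u' with
    | [], [] => exact ⟨a2.symm.trans b2, e⟩
    | [], c :: u' =>
      exact absurd ⟨_, e⟩ (a4 c (b1.1 c (by simp)))
    | c :: u, [] =>
      exact absurd ⟨_, e.symm⟩ (b4 c (a1.1 c (by simp)))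
    | c :: u, d :: u' =>
      have hc := (geo_cons hs c u).1 a1
      have hd := (geo_cons hs d u').1 b1
      have ra := (key_step hN a3 hl hr).1
      have rb := (key_step hN b3 hl hr).1
      have la : ((c :: u) ++ w0).length ≤ N + 1 := by rw [← a3.length]; exact hl
      have lb : ((d :: u') ++ w0').length ≤ N + 1 := by rw [← b3.length]; exact hl
      have hap := (key_step hN e la ra).2
      simp only [List.cons_append, List.length_cons, Nat.add_le_add_iff_right] at la lb ra rb
      have ga : P.Gate s (u ++ w0) (wev (P.f s) u) w0 := ⟨u, hc.2.1, rfl, .refl _, a4⟩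
      have gb : P.Gate s (u' ++ w0') (wev (P.f s) u') w0' := ⟨u', hd.2.1, rfl, .refl _, b4⟩
      have main : (c = d ∧ P.Eqv (u ++ w0) (u' ++ w0')) ∨ (c.1 ≠ d.1 ∧ ∃ h h' w1,
          P.Gate s(c.1, d.1) (u ++ w0) h w1 ∧ P.Gate s(c.1, d.1) (u' ++ w0') h' w1 ∧
          lev (P.f s(c.1, d.1)) c * h = lev (P.f s(c.1, d.1)) d * h') := by
        rcases hap with h1 | ⟨a, v, b, v', h1, h2, h3⟩
        · simp only [List.cons_append, List.cons.injEq] at h1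
          exact Or.inl ⟨h1.1, h1.2 ▸ .refl _⟩
        · simp only [List.cons_append, List.cons.injEq] at h1 h2
          obtain ⟨rfl, rfl⟩ := h1
          obtain ⟨rfl, rfl⟩ := h2
          exact h3
      rw [← a2, ← b2, wev_cons, wev_cons]
      rcases main with ⟨rfl, e1⟩ | ⟨hcd, k, k', w1, g1, g2, hk⟩
      · obtain ⟨x1, x2⟩ := hN.U s _ _ _ _ _ hs la ra.1 ga (gate_congr e1.symm (.refl _) gb)
        exact ⟨by rw [x1], x2⟩
      · have hss : s = s(c.1, d.1) := ((Sym2.mem_and_mem_iff hcd).1 ⟨hc.1, hd.1⟩)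
        subst hss
        obtain ⟨x1, x2⟩ := hN.U _ _ _ _ _ _ hs la ra.1 ga g1
        obtain ⟨y1, y2⟩ := hN.U _ _ _ _ _ _ hs lb rb.1 gb g2
        exact ⟨by rw [x1, y1, hk], x2.tr y2.symm⟩

theorem H_all (N : ℕ) : P.H N := by
  induction N with
  | zero => exact H_zero
  | succ N ih => exact H_succ ih

theorem cancel {a : I × Bool} {u v : List (I × Bool)} (hr : P.Red (a :: u)) (e : P.Eqv (a :: u) (a :: v)) :
    P.Eqv u v := by
  rcases (key_step (H_all u.length) e (by simp) hr).2 with h | ⟨a', w, b, w', h1, h2, h3⟩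
  · simp only [List.cons.injEq, true_and] at h
    exact h ▸ .refl _
  · simp only [List.cons.injEq] at h1 h2
    obtain ⟨rfl, rfl⟩ := h1
    obtain ⟨rfl, rfl⟩ := h2
    rcases h3 with h3 | h3
    · exact h3.2
    · exact absurd rfl h3.1

end PS

namespace PS
variable {I : Type} {P : PS I} {s : Sym2 I} {N : ℕ}

theorem gate_pow_aux {i j c : I} (hij : i ≠ j) (hci : c ≠ i) (hcj : c ≠ j) {γ α : Bool}
    {v v0 : List (I × Bool)} (hr : P.Red v) (hc : P.Starts v (c, γ)) {k : P.D s(i, j)}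
    (hG : P.Gate s(i, j) v k v0) (hF : P.F s(i, j) k (i, α)) :
    ∃ a : I × Bool, ∃ r : ℕ, a.1 ∈ s(i, j) ∧ P.Geo s(i, j) (List.replicate r a) ∧
      k = lev (P.f s(i, j)) a ^ r := by
  have hN : P.H v.length := H_all _
  have hS : P.Starts v (i, α) := starts_of_F (nd hij) hG (by simp) hF
  obtain ⟨r, q', e, hr', hlen, n1, n2⟩ := strip hN (i, α) v le_rfl hr (not_starts_linv hN hij le_rfl hr hS)
  have hr1 : 1 ≤ r := by
    rcases Nat.eq_zero_or_pos r with rfl | h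
    · exact absurd (starts_congr e hS) n1
    · exact h
  obtain ⟨k', hk', hGk'⟩ := gate_strip hN (nd hij) le_rfl hr e
    (by intro u hu; rw [List.eq_of_mem_replicate hu]; simp) hG
  rw [wev_replicate] at hk'
  by_cases hk1 : k' = 1
  · subst hk1
    refine ⟨(i, α), r, by simp, ?_, by simpa using hk'⟩
    exact hN.G _ _ q' (nd hij) (by rw [← e.length]) (hN.C _ _ le_rfl hr e)
      (by intro u hu; rw [List.eq_of_mem_replicate hu]; simp)
  · exfalso
    obtain ⟨b, hb⟩ := starts_other hij hGk' hk1 n1 n2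
    obtain ⟨g, w0, hg⟩ := gate_exists hN (nd hci) v le_rfl hr
    have Fy := F_of_starts hN (nd hci) le_rfl hr hg (by simp) hc
    obtain ⟨g1, hg1, hGg1⟩ := gate_strip hN (nd hci) le_rfl hr e
      (by intro u hu; rw [List.eq_of_mem_replicate hu]; simp) hg
    rw [wev_replicate] at hg1
    have hg1' : g1 ≠ 1 := by
      rintro rfl
      rw [hg1] at Fy
      exact not_F_pow hci _ true _ _ 0 hr1 (by simpa using Fy)
    obtain ⟨d, hd⟩ : ∃ d, P.Starts q' (c, d) := by
      have hsw : s(c, i) = s(i, c) := Sym2.eq_swap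
      clear hg1
      revert g1
      rw [hsw]
      intro g1 h3 h4
      exact starts_other hci.symm h3 h4 n1 n2
    rw [hg1] at Fy
    exact descent hN q' c j i hcj hci hij.symm (by omega) hr' d b hd hb g1 w0 hGg1 α γ r hr1 Fy

theorem gate_pow {i j c : I} (hij : i ≠ j) (hci : c ≠ i) (hcj : c ≠ j) {γ : Bool}
    {v v0 : List (I × Bool)} (hr : P.Red v) (hc : P.Starts v (c, γ)) {k : P.D s(i, j)}
    (hG : P.Gate s(i, j) v k v0) :
    ∃ a : I × Bool, ∃ r : ℕ, a.1 ∈ s(i, j) ∧ P.Geo s(i, j) (List.replicate r a) ∧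
      k = lev (P.f s(i, j)) a ^ r := by
  by_cases hk : k = 1
  · exact ⟨(i, true), 0, by simp, geo_nil (nd hij), by simpa using hk⟩
  · obtain ⟨⟨a, α⟩, ha, hF⟩ := exists_F (nd hij) hk
    rcases Sym2.mem_iff.1 ha with h | h
    · simp only at h; subst h
      exact gate_pow_aux hij hci hcj hr hc hG hF
    · simp only at h; subst h
      have hsw : s(i, a) = s(a, i) := Sym2.eq_swap
      revert k
      rw [hsw]
      intro k hG hk hF
      exact gate_pow_aux hij.symm hcj hci hr hc hG hF

/-! ### The action on classes of reduced words -/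

variable (P)

instance stdRed : Setoid {w : List (I × Bool) // P.Red w} where
  r u v := P.Eqv u.1 v.1
  iseqv := ⟨fun u => .refl _, fun h => h.symm, fun h k => h.tr k⟩

/-- Classes of reduced words. -/
def Om : Type := Quotient P.stdRed

variable {P}

/-- The class of a reduced word. -/
def cl (w : List (I × Bool)) (h : P.Red w) : P.Om := Quotient.mk _ ⟨w, h⟩

theorem cl_eq {w w' : List (I × Bool)} {h : P.Red w} {h' : P.Red w'} : cl w h = cl w' h' ↔ P.Eqv w w' :=
  ⟨fun e => Quotient.exact e, fun e => Quotient.sound e⟩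

theorem red_congr {w w' : List (I × Bool)} (h : P.Red w) (e : P.Eqv w w') : P.Red w' :=
  (H_all w.length).C _ _ le_rfl h e

open Classical in
/-- The action of a letter on words. -/
noncomputable def act0 (a : I × Bool) (w : {w : List (I × Bool) // P.Red w}) : P.Om :=
  if h : P.Starts w.1 (linv a) then cl h.choose (red_congr w.2 h.choose_spec).1
  else cl (a :: w.1) ⟨w.2, h⟩

theorem act0_pos {a : I × Bool} {w w' : List (I × Bool)} (hw : P.Red w) (e : P.Eqv w (linv a :: w')) :
    act0 a ⟨w, hw⟩ = cl w' (red_congr hw e).1 := by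
  have h : P.Starts w (linv a) := ⟨w', e⟩
  unfold act0
  rw [dif_pos h, cl_eq]
  exact cancel (red_congr hw h.choose_spec) (h.choose_spec.symm.tr e)

theorem act0_neg {a : I × Bool} {w : List (I × Bool)} (hw : P.Red w) (h : ¬ P.Starts w (linv a)) :
    act0 a ⟨w, hw⟩ = cl (a :: w) ⟨hw, h⟩ := by
  unfold act0
  rw [dif_neg h]

/-- The action of a letter on classes. -/
noncomputable def act (a : I × Bool) : P.Om → P.Om :=
  Quotient.lift (act0 a) (by
    rintro ⟨w, hw⟩ ⟨w', hw'⟩ (e : P.Eqv w w')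
    by_cases h : P.Starts w (linv a)
    · obtain ⟨v, hv⟩ := h
      rw [act0_pos hw hv, act0_pos hw' (e.symm.tr hv)]
    · rw [act0_neg hw h, act0_neg hw' (fun h' => h (starts_congr e.symm h'))]
      exact cl_eq.2 (.cons _ _ _ e))

theorem act_pos {a : I × Bool} {w w' : List (I × Bool)} (hw : P.Red w) (e : P.Eqv w (linv a :: w')) :
    act a (cl w hw) = cl w' (red_congr hw e).1 := act0_pos hw e

theorem act_neg {a : I × Bool} {w : List (I × Bool)} (hw : P.Red w) (h : ¬ P.Starts w (linv a)) :
    act a (cl w hw) = cl (a :: w) ⟨hw, h⟩ := act0_neg hw h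

theorem om_cases (o : P.Om) : ∃ w h, o = cl w h := by
  induction o using Quotient.inductionOn with
  | h w => exact ⟨w.1, w.2, rfl⟩

theorem act_act (a : I × Bool) (o : P.Om) : act (linv a) (act a o) = o := by
  obtain ⟨w, hw, rfl⟩ := om_cases o
  by_cases h : P.Starts w (linv a)
  · obtain ⟨v, e⟩ := h
    have h1 := red_congr hw e
    rw [act_pos hw e, act_neg h1.1 h1.2]
    exact cl_eq.2 e.symm
  · have e : P.Eqv (a :: w) (linv (linv a) :: w) := by rw [linv_linv]; exact .refl _
    have hr : P.Red (a :: w) := ⟨hw, h⟩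
    rw [act_neg hw h]
    exact act_pos hr e

/-- The permutation given by a letter. -/
noncomputable def perm (a : I × Bool) : Equiv.Perm P.Om where
  toFun := act a
  invFun := act (linv a)
  left_inv := act_act a
  right_inv o := by simpa using act_act (linv a) o

/-- The permutation given by a generator. -/
noncomputable def pg (i : I) : Equiv.Perm P.Om := perm (i, true)

theorem lev_pg (a : I × Bool) : lev (pg (P := P)) a = perm a := by
  obtain ⟨i, b⟩ := a
  cases b
  · ext o; rfl
  · rfl

theorem wev_gate (hs : ¬ s.IsDiag) (u : List (I × Bool)) (hu : ∀ x ∈ u, x.1 ∈ s) {w w0 : List (I × Bool)}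
    (hw : P.Red w) {h : P.D s} (hG : P.Gate s w h w0) :
    ∃ w' hw', wev (pg (P := P)) u (cl w hw) = cl w' hw' ∧ P.Gate s w' (wev (P.f s) u * h) w0 := by
  induction u with
  | nil => exact ⟨w, hw, rfl, by simpa using hG⟩
  | cons a u ih =>
    obtain ⟨w', hw', e, hG'⟩ := ih (fun x hx => hu x (by simp [hx]))
    have ha := hu a (by simp)
    simp only [wev_cons, Equiv.Perm.mul_apply, e, lev_pg]
    show ∃ w1 hw1, act a (cl w' hw') = cl w1 hw1 ∧ _
    by_cases hS : P.Starts w' (linv a)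
    · obtain ⟨v, ev⟩ := hS
      refine ⟨_, _, act_pos hw' ev, ?_⟩
      obtain ⟨k, hk, hGk⟩ := gate_strip (p := [linv a]) (H_all _) hs le_rfl hw' ev (by simpa using ha) hG'
      rw [mul_assoc, hk]
      simpa using hGk
    · refine ⟨_, _, act_neg hw' hS, ?_⟩
      have := gate_app (H_all _) hs [a] w' le_rfl ⟨hw', hS⟩ (by simpa using ha) hG'
      simpa [mul_assoc] using this

theorem wev_pg_eq (hs : ¬ s.IsDiag) (u v : List (I × Bool)) (hu : ∀ x ∈ u, x.1 ∈ s)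
    (hv : ∀ x ∈ v, x.1 ∈ s) (h : wev (P.f s) u = wev (P.f s) v) :
    wev (pg (P := P)) u = wev (pg (P := P)) v := by
  ext o
  obtain ⟨w, hw, rfl⟩ := om_cases o
  obtain ⟨k, w0, hG⟩ := gate_exists (H_all _) hs w le_rfl hw
  obtain ⟨w1, h1, e1, g1⟩ := wev_gate hs u hu hw hG
  obtain ⟨w2, h2, e2, g2⟩ := wev_gate hs v hv hw hG
  rw [e1, e2, cl_eq]
  rw [h] at g1
  exact gate_eqv hs g1 g2

/-- Length of a class. -/
def len : P.Om → ℕ := Quotient.lift (fun w => w.1.length) (fun _ _ h => Eqv.length h)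

theorem len_act (a : I × Bool) (o : P.Om) : len (act a o) ≤ len o + 1 := by
  obtain ⟨w, hw, rfl⟩ := om_cases o
  by_cases h : P.Starts w (linv a)
  · obtain ⟨v, e⟩ := h
    rw [act_pos hw e]
    have := e.length
    show v.length ≤ w.length + 1
    simp at this; omega
  · rw [act_neg hw h]
    exact le_rfl

/-! ### Consequences in the group -/

section grp

variable {G : Type} [Group G] {x : I → G} {l : G → ℕ}

/-- Compatibility of the system with a group `G`. -/
structure Compat (P : PS I) (x : I → G) (l : G → ℕ) : Prop where
  hom : ∀ s, ¬ s.IsDiag → ∃ φ : P.D s →* G, ∀ i ∈ s, φ (P.f s i) = x i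
  rho : ∃ ρ : G →* Equiv.Perm P.Om, ∀ i, ρ (x i) = pg i
  le : ∀ w, l (wev x w) ≤ w.length
  ex : ∀ g, ∃ w, wev x w = g ∧ w.length = l g

theorem map_wev {A B : Type} [Group A] [Group B] (φ : A →* B) (f : I → A) (g : I → B)
    (u : List (I × Bool)) (hu : ∀ y ∈ u, φ (f y.1) = g y.1) : φ (wev f u) = wev g u := by
  induction u with
  | nil => simp
  | cons a u ih =>
    have := hu a (by simp)
    rw [wev_cons, wev_cons, map_mul, ih (fun y hy => hu y (by simp [hy]))]
    congr 1
    unfold lev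
    split <;> simp [this]


theorem wev_eq_of_D (hc : Compat P x l) (hs : ¬ s.IsDiag) {u v : List (I × Bool)} (hu : ∀ y ∈ u, y.1 ∈ s)
    (hv : ∀ y ∈ v, y.1 ∈ s) (h : wev (P.f s) u = wev (P.f s) v) : wev x u = wev x v := by
  obtain ⟨φ, hφ⟩ := hc.hom s hs
  rw [← map_wev φ (P.f s) x u (fun y hy => hφ _ (hu y hy)),
    ← map_wev φ (P.f s) x v (fun y hy => hφ _ (hv y hy)), h]

theorem wev_eq_of_eqv (hc : Compat P x l) {u v : List (I × Bool)} (e : P.Eqv u v) : wev x u = wev x v := by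
  induction e with
  | refl w => rfl
  | swap s u v w hs hu hv h => simp [wev_eq_of_D hc hs hu.1 hv.1 h]
  | cons a u v h ih => simp [ih]
  | trans u v w h h' ih ih' => rw [ih, ih']

theorem wev_red (w : List (I × Bool)) (hw : P.Red w) : wev (pg (P := P)) w (cl [] trivial) = cl w hw := by
  induction w with
  | nil => rfl
  | cons a w ih =>
    rw [wev_cons, Equiv.Perm.mul_apply, ih hw.1, lev_pg]
    exact act_neg hw.1 hw.2

theorem rho_wev {ρ : G →* Equiv.Perm P.Om} (hρ : ∀ i, ρ (x i) = pg i) (w : List (I × Bool)) :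
    ρ (wev x w) = wev pg w := map_wev ρ x pg w (fun y _ => hρ y.1)

theorem eqv_of_wev (hc : Compat P x l) {u v : List (I × Bool)} (hu : P.Red u) (hv : P.Red v) (h : wev x u = wev x v) :
    P.Eqv u v := by
  obtain ⟨ρ, hρ⟩ := hc.rho
  have h1 := congrArg (fun g => ρ g (cl [] trivial)) h
  simp only [rho_wev hρ, wev_red u hu, wev_red v hv] at h1
  exact cl_eq.1 h1

theorem len_le (w : List (I × Bool)) (o : P.Om) : len (wev (pg (P := P)) w o) ≤ w.length + len o := by
  induction w with
  | nil => simp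
  | cons a w ih =>
    rw [wev_cons, Equiv.Perm.mul_apply, lev_pg]
    have := len_act a (wev (pg (P := P)) w o)
    show len (act a _) ≤ _
    simp only [List.length_cons]; omega

theorem l_red (hc : Compat P x l) {w : List (I × Bool)} (hw : P.Red w) : l (wev x w) = w.length := by
  obtain ⟨ρ, hρ⟩ := hc.rho
  obtain ⟨v, h1, h2⟩ := hc.ex (wev x w)
  refine le_antisymm (hc.le w) ?_
  rw [← h2]
  have h3 := len_le (P := P) v (cl [] trivial)
  rw [← rho_wev hρ, h1, rho_wev hρ, wev_red w hw] at h3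
  exact h3

theorem red_of_l (hc : Compat P x l) {w : List (I × Bool)} (hw : l (wev x w) = w.length) : P.Red w := by
  induction w with
  | nil => trivial
  | cons a w ih =>
    have h0 : l (wev x w) = w.length := by
      refine le_antisymm (hc.le w) ?_
      obtain ⟨v, h1, h2⟩ := hc.ex (wev x w)
      have := hc.le (a :: v)
      rw [wev_cons, h1, ← wev_cons, hw] at this
      simp at this; omega
    refine ⟨ih h0, ?_⟩
    rintro ⟨v, e⟩
    have h1 := wev_eq_of_eqv hc e
    have h2 : wev x (a :: w) = wev x v := by rw [wev_cons, h1]; simp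
    have h3 := hc.le v
    rw [← h2, hw] at h3
    have h4 := e.length
    simp at h3 h4; omega

theorem red_geo (hs : ¬ s.IsDiag) {u : List (I × Bool)} (hu : P.Geo s u) : P.Red u := by
  have := red_geo_app (H_all u.length) hs [] trivial
    (by rintro y - ⟨v, e⟩; simpa using e.length) u hu (by simp)
  simpa using this

/-- Every element has a canonical decomposition which dominates all others. -/
theorem decomp (hc : Compat P x l) (hs : ¬ s.IsDiag) (g : G) : ∃ u w0, P.Geo s u ∧ wev x (u ++ w0) = g ∧
    P.Red (u ++ w0) ∧ ∀ u' v', (∀ y ∈ u', y.1 ∈ s) → P.Red (u' ++ v') → wev x (u' ++ v') = g →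
      ∃ k u'', P.Geo s u'' ∧ wev (P.f s) u'' = k ∧ P.Gate s v' k w0 ∧ u.length = u'.length + u''.length ∧
        wev x u = wev x u' * wev x u'' := by
  obtain ⟨w, h1, h2⟩ := hc.ex g
  have hw : P.Red w := red_of_l hc (by rw [h1, h2])
  obtain ⟨k, w0, hG⟩ := gate_exists (H_all _) hs w le_rfl hw
  have hG' := hG
  obtain ⟨u, a1, a2, a3, a4⟩ := hG'
  refine ⟨u, w0, a1, by rw [← wev_eq_of_eqv hc a3, h1], red_congr hw a3, ?_⟩
  intro u' v' hu' hr' hg'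
  have e : P.Eqv w (u' ++ v') := eqv_of_wev hc hw hr' (h1.trans hg'.symm)
  obtain ⟨k', hk, hGk⟩ := gate_strip (H_all _) hs le_rfl hw e hu' hG
  have hGk' := hGk
  obtain ⟨u'', b1, b2, b3, b4⟩ := hGk'
  refine ⟨k', u'', b1, b2, hGk, ?_, ?_⟩
  · have e1 := e.length
    have e2 := a3.length
    have e3 := b3.length
    simp at e1 e2 e3; omega
  · rw [← wev_append]
    refine wev_eq_of_D hc hs a1.1 ?_ (by rw [a2, hk, wev_append, b2])
    intro y hy
    rcases List.mem_append.1 hy with hy | hy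
    · exact hu' y hy
    · exact b1.1 y hy

end grp
end PS

/-! ### Two-generator models: the free case -/

namespace FreeModel

theorem lev_of (x : Bool × Bool) : lev FreeGroup.of x = FreeGroup.mk [x] := by
  rcases x with ⟨b, e⟩
  cases e <;> simp [lev, FreeGroup.of, FreeGroup.inv_mk, FreeGroup.invRev]

theorem toWord_lev (x : Bool × Bool) (h : FreeGroup Bool) :
    (lev FreeGroup.of x * h).toWord =
      if h.toWord.head? = some (linv x) then h.toWord.tail else x :: h.toWord := by
  have h1 : lev FreeGroup.of x * h = FreeGroup.mk (x :: h.toWord) := by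
    rw [lev_of, ← FreeGroup.mk_toWord (x := h), FreeGroup.mul_mk]
    simp
  rw [h1, FreeGroup.toWord_mk, FreeGroup.reduce.cons, FreeGroup.reduce_toWord]
  rcases h.toWord with _ | ⟨y, t⟩
  · simp
  · rcases x with ⟨b, e⟩; rcases y with ⟨b', e'⟩
    cases b <;> cases e <;> cases b' <;> cases e' <;> simp [linv]

theorem toWord_pow (x : Bool × Bool) (r : ℕ) :
    (lev FreeGroup.of x ^ r).toWord = List.replicate r x := by
  induction r with
  | zero => simp
  | succ r ih =>
    rw [pow_succ', toWord_lev, ih]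
    rw [if_neg]
    · rfl
    · rcases r with _ | r
      · simp
      · rcases x with ⟨b, e⟩; cases e <;> simp [linv, List.replicate_succ]

theorem toWord_pow_pow (x z : Bool × Bool) (hxz : x.1 ≠ z.1) (t r : ℕ) :
    (lev FreeGroup.of z ^ t * lev FreeGroup.of x ^ r).toWord =
      List.replicate t z ++ List.replicate r x := by
  induction t with
  | zero => simp [toWord_pow]
  | succ t ih =>
    rw [pow_succ', mul_assoc, toWord_lev, ih]
    rw [if_neg]
    · rfl
    · rcases t with _ | t
      · rcases r with _ | r
        · simp
        · simp only [List.replicate_succ, List.replicate_zero, List.nil_append, List.head?_cons]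
          intro h
          exact hxz (by rw [Option.some_inj.1 h]; rfl)
      · rcases z with ⟨b, e⟩; cases e <;> simp [linv, List.replicate_succ]

theorem norm_lev (x : Bool × Bool) (h : FreeGroup Bool) :
    (h.toWord.head? = some (linv x) ∧ h.norm = (lev FreeGroup.of x * h).norm + 1) ∨
    (h.toWord.head? ≠ some (linv x) ∧ (lev FreeGroup.of x * h).norm = h.norm + 1) := by
  unfold FreeGroup.norm
  rw [toWord_lev]
  by_cases hh : h.toWord.head? = some (linv x)
  · left
    rw [if_pos hh]
    refine ⟨hh, ?_⟩
    rcases e : h.toWord with _ | ⟨y, t⟩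
    · rw [e] at hh; simp at hh
    · simp
  · right
    rw [if_neg hh]
    exact ⟨hh, by simp⟩

theorem isDih : IsDih s(false, true) (FreeGroup.of : Bool → FreeGroup Bool) FreeGroup.norm where
  one := FreeGroup.norm_one
  zero h := FreeGroup.norm_eq_zero.1
  step x h _ := by
    rcases norm_lev x h with ⟨-, h1⟩ | ⟨-, h1⟩
    · exact .inr h1
    · exact .inl h1
  desc h hh := by
    rcases e : h.toWord with _ | ⟨y, t⟩
    · exact absurd (by unfold FreeGroup.norm; rw [e]; rfl) hh
    · refine ⟨linv y, by cases y.1 <;> simp, ?_⟩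
      rcases norm_lev (linv y) h with ⟨-, h1⟩ | ⟨h0, h1⟩
      · exact h1.symm
      · exact absurd (by rw [e]; simp) h0
  d1 x h _ hlt := by
    rw [← lev_linv]
    rcases norm_lev x h with ⟨h0, h1⟩ | ⟨-, h1⟩
    · rcases norm_lev (linv x) h with ⟨h2, h3⟩ | ⟨-, h3⟩
      · rw [h0, linv_linv] at h2
        rcases x with ⟨b, e⟩
        cases e <;> simp [linv] at h2
      · omega
    · omega
  d3 x x' z _ _ hxz hx' t r ht := by
    have h1 := toWord_pow_pow x' z (by rw [hx']; exact hxz) t r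
    rcases norm_lev x (lev FreeGroup.of z ^ t * lev FreeGroup.of x' ^ r) with ⟨h0, h2⟩ | ⟨-, h2⟩
    · rw [h1] at h0
      obtain ⟨t, rfl⟩ : ∃ t', t = t' + 1 := ⟨t - 1, by omega⟩
      simp only [List.replicate_succ, List.cons_append, List.head?_cons] at h0
      exact absurd (by rw [Option.some_inj.1 h0]; rfl) hxz
    · omega

end FreeModel

theorem map_altProd {A B : Type*} [Monoid A] [Monoid B] (φ : A →* B) (n : ℕ) (x y : A) :
    φ (altProd n x y) = altProd n (φ x) (φ y) := by
  induction n generalizing x y with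
  | zero => simp [altProd]
  | succ n ih => simp [altProd, ih]

/-! ### Two-generator models: the finite case -/

namespace FinModel

/-- Iterated flip. -/
def fl : ℕ → Bool → Bool
  | 0, p => p
  | j + 1, p => !fl j p

theorem fl_not (j : ℕ) (p : Bool) : fl j (!p) = !fl j p := by
  induction j with
  | zero => rfl
  | succ j ih => simp [fl, ih]

theorem fl_add (i j : ℕ) (p : Bool) : fl (i + j) p = fl j (fl i p) := by
  induction j with
  | zero => rfl
  | succ j ih => rw [← Nat.add_assoc]; simp [fl, ih]

theorem fl_fl (j : ℕ) (p : Bool) : fl j (fl j p) = p := by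
  induction j generalizing p with
  | zero => rfl
  | succ j ih => simp [fl, fl_not, ih]

variable {K : ℕ}

/-- States: Garside-type normal forms. -/
abbrev St (K : ℕ) := ℤ × Option (Bool × Fin (K + 2) × List (Fin (K + 2)))

/-- Prepend-free state from a list of lengths. -/
def ofList (f : Bool) : List (Fin (K + 2)) → Option (Bool × Fin (K + 2) × List (Fin (K + 2)))
  | [] => none
  | d :: l => some (f, d, l)

/-- Action of a positive letter. -/
def pos (a : Bool) : St K → St K
  | (e, none) => (e, some (a, 0, []))
  | (e, some (f, c, l)) =>
    if f = a then (e, some (a, 0, c :: l))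
    else if h : c.1 + 1 < K + 2 then (e, some (a, ⟨c.1 + 1, h⟩, l))
    else (e + 1, ofList f l)

/-- Action of a negative letter. -/
def neg (a : Bool) : St K → St K
  | (e, none) => (e - 1, some (!a, Fin.last _, []))
  | (e, some (f, c, l)) =>
    if f = a then
      if c.1 = 0 then (e, ofList f l)
      else (e, some (!a, ⟨c.1 - 1, by omega⟩, l))
    else (e - 1, some (f, Fin.last _, c :: l))

theorem pos_neg (a : Bool) (σ : St K) : pos a (neg a σ) = σ := by
  rcases σ with ⟨e, _ | ⟨f, c, l⟩⟩
  · simp [neg, pos, ofList]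
  · unfold neg
    by_cases hf : f = a
    · subst hf
      by_cases hc : c.1 = 0
      · have : c = 0 := Fin.ext hc
        subst this
        rcases l with _ | ⟨d, l⟩ <;> simp [pos, ofList]
      · have h1 : c.1 - 1 + 1 = c.1 := by omega
        have h2 := c.2
        simp [hc, pos, h1]
    · have : f = !a := by cases f <;> cases a <;> simp_all
      subst this
      simp [pos, ofList]

theorem neg_pos (a : Bool) (σ : St K) : neg a (pos a σ) = σ := by
  rcases σ with ⟨e, _ | ⟨f, c, l⟩⟩
  · simp [neg, pos, ofList]
  · unfold pos
    by_cases hf : f = a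
    · subst hf
      simp [neg, ofList]
    · have : f = !a := by cases f <;> cases a <;> simp_all
      subst this
      by_cases hc : c.1 + 1 < K + 2
      · simp [hc, neg]
      · have h2 := c.2
        have : c = Fin.last _ := Fin.ext (by simp; omega)
        subst this
        rcases l with _ | ⟨d, l⟩ <;> simp [neg, ofList]

/-- The permutation of states given by a generator. -/
def pi (a : Bool) : Equiv.Perm (St K) := ⟨pos a, neg a, neg_pos a, pos_neg a⟩

/-- Apply `j` alternating positive letters, the first one being `p`. -/
def sq : ℕ → Bool → St K → St K
  | 0, _, σ => σ
  | j + 1, p, σ => pos (fl j p) (sq j p σ)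

theorem sq_add (i j : ℕ) (p : Bool) (σ : St K) : sq (i + j) p σ = sq j (fl i p) (sq i p σ) := by
  induction j with
  | zero => rfl
  | succ j ih => rw [← Nat.add_assoc]; simp [sq, ih, fl_add]

theorem climb (j : ℕ) (e : ℤ) (f : Bool) (c : Fin (K + 2)) (l) (h : c.1 + j < K + 2) :
    sq j (!f) (e, some (f, c, l)) = (e, some (fl j f, ⟨c.1 + j, h⟩, l)) := by
  induction j with
  | zero => rfl
  | succ j ih =>
    have h1 : c.1 + j + 1 < K + 2 := by omega
    rw [sq, ih (by omega)]
    simp [pos, fl_not, fl, h1]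
    omega

theorem climb_last (e : ℤ) (f : Bool) (c : Fin (K + 2)) (l) :
    sq (K + 2 - c.1) (!f) (e, some (f, c, l)) = (e + 1, ofList (fl (K + 1 - c.1) f) l) := by
  have h2 := c.2
  have h1 : K + 2 - c.1 = (K + 1 - c.1) + 1 := by omega
  rw [h1, sq, climb _ _ _ _ _ (by omega)]
  have h3 : c.1 + (K + 1 - c.1) = K + 1 := by omega
  simp [pos, fl_not, h3]

theorem pos_ofList (f : Bool) (e : ℤ) (l : List (Fin (K + 2))) :
    pos f (e, ofList f l) = (e, some (f, 0, l)) := by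
  rcases l with _ | ⟨d, l⟩ <;> simp [ofList, pos]

theorem braid_none (e : ℤ) (p : Bool) : sq (K + 3) p (e, none) = ((e + 1, none) : St K) := by
  rw [show K + 3 = 1 + (K + 2) by omega, sq_add]
  have := climb_last (K := K) e p 0 []
  show sq (K + 2) (!p) (e, some (p, 0, [])) = _
  simpa [ofList] using this

theorem braid_same (e : ℤ) (f : Bool) (c : Fin (K + 2)) (l) :
    sq (K + 3) f (e, some (f, c, l)) = (e + 1, some (fl (K + 1) f, c, l)) := by
  rw [show K + 3 = 1 + (K + 2) by omega, sq_add]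
  have := climb_last (K := K) e f 0 (c :: l)
  simpa [sq, pos, fl, ofList] using this

theorem braid_diff (e : ℤ) (f : Bool) (c : Fin (K + 2)) (l) :
    sq (K + 3) (!f) (e, some (f, c, l)) = (e + 1, some (fl (K + 1) f, c, l)) := by
  have h2 := c.2
  rw [show K + 3 = (K + 2 - c.1) + (1 + c.1) by omega, sq_add, climb_last, sq_add]
  have h1 : fl (K + 2 - c.1) (!f) = fl (K + 1 - c.1) f := by
    rw [show K + 2 - c.1 = (K + 1 - c.1) + 1 by omega]; simp [fl, fl_not]
  have h3 : ∀ q : Bool, sq 1 q = (pos q : St K → St K) := fun q => rfl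
  have h4 : ∀ q, fl 1 q = !q := fun q => rfl
  have h5 : fl (K + 1) f = fl c.1 (fl (K + 1 - c.1) f) := by
    rw [← fl_add]; congr 1; omega
  rw [h1, h3, h4, pos_ofList, climb _ _ _ _ _ (by simp), h5]
  simp

theorem braid (p : Bool) (σ : St K) : sq (K + 3) p σ = sq (K + 3) (!p) σ := by
  rcases σ with ⟨e, _ | ⟨f, c, l⟩⟩
  · rw [braid_none, braid_none]
  · by_cases hf : f = p
    · subst hf
      rw [braid_same, braid_diff]
    · have : f = !p := by cases f <;> cases p <;> simp_all
      subst this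
      rw [braid_same]
      have := braid_diff e (!p) c l
      rw [Bool.not_not] at this
      exact this

theorem alt_pi (j : ℕ) (p : Bool) (σ : St K) :
    altProd (j + 1) (pi (fl j p)) (pi (!fl j p)) σ = sq (j + 1) p σ := by
  induction j with
  | zero => rfl
  | succ j ih =>
    rw [altProd, Equiv.Perm.mul_apply, sq, ← ih]
    simp [fl]
    rfl

theorem alt_pi_eq : altProd (K + 3) (pi true) (pi false) = (altProd (K + 3) (pi false) (pi true) : Equiv.Perm (St K)) := by
  ext1 σ
  have key : ∀ q : Bool, altProd (K + 3) (pi q) (pi (!q)) σ = sq (K + 3) (fl (K + 2) q) σ := by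
    intro q
    have := alt_pi (K + 2) (fl (K + 2) q) σ
    rwa [fl_fl] at this
  have h1 := key true
  have h2 := key false
  simp only [Bool.not_true, Bool.not_false] at h1 h2
  rw [h1, h2, braid, ← fl_not]
  rfl

/-! The counting function. -/

/-- The list of factors. -/
def fac : St K → List (Fin (K + 2))
  | (_, none) => []
  | (_, some (_, c, l)) => c :: l

/-- Number of factors of length more than `v`, shifted. -/
def cnt (σ : St K) (v : ℕ) : ℤ := σ.1 + ((fac σ).countP (fun c => v ≤ c.1) : ℕ)

/-- Index increased by a positive letter. -/
def pidx (a : Bool) : St K → ℕ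
  | (_, none) => 0
  | (_, some (f, c, _)) => if f = a then 0 else c.1 + 1

/-- Index decreased by a negative letter. -/
def midx (a : Bool) : St K → ℕ
  | (_, none) => K + 2
  | (_, some (f, c, _)) => if f = a then c.1 else K + 2

theorem pidx_le_midx (a : Bool) (σ : St K) : pidx a σ ≤ midx a σ := by
  rcases σ with ⟨e, _ | ⟨f, c, l⟩⟩
  · simp [pidx]
  · have := c.2
    simp only [pidx, midx]; split_ifs <;> omega

theorem midx_le (a : Bool) (σ : St K) : midx a σ ≤ K + 2 := by
  rcases σ with ⟨e, _ | ⟨f, c, l⟩⟩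
  · simp [midx]
  · have := c.2
    simp only [midx]; split_ifs <;> omega

theorem cnt_anti (σ : St K) {v v' : ℕ} (h : v ≤ v') : cnt σ v' ≤ cnt σ v := by
  unfold cnt
  have : (fac σ).countP (fun c => v' ≤ c.1) ≤ (fac σ).countP (fun c => v ≤ c.1) := by
    apply List.countP_mono_left
    intro x _ hx
    simp at hx ⊢; omega
  omega

theorem fac_ofList (e : ℤ) (f : Bool) (l : List (Fin (K + 2))) : fac (e, ofList f l) = l := by
  cases l <;> rfl

theorem cnt_pos (a : Bool) (σ : St K) (v : ℕ) (hv : v ≤ K + 2) :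
    cnt (pos a σ) v = cnt σ v + if v = pidx a σ then 1 else 0 := by
  rcases σ with ⟨e, _ | ⟨f, c, l⟩⟩
  · simp [cnt, pos, fac, pidx, List.countP_cons]
    by_cases hv0 : v = 0 <;> simp [hv0]
  · have hc := c.2
    simp only [pos, pidx]
    by_cases hf : f = a
    · simp [hf, cnt, fac, List.countP_cons]
      omega
    · by_cases h : c.1 + 1 < K + 2
      · simp [hf, h, cnt, fac, List.countP_cons]
        split_ifs <;> omega
      · simp only [if_neg hf, dif_neg h]
        simp only [cnt, fac_ofList]
        simp [fac, List.countP_cons]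
        split_ifs <;> omega

theorem cnt_neg (a : Bool) (σ : St K) (v : ℕ) (hv : v ≤ K + 2) :
    cnt (neg a σ) v = cnt σ v - if v = midx a σ then 1 else 0 := by
  have h1 := cnt_pos a (neg a σ) v hv
  rw [pos_neg] at h1
  rw [h1]
  have : pidx a (neg a σ) = midx a σ := by
    rcases σ with ⟨e, _ | ⟨f, c, l⟩⟩
    · simp [neg, pidx, midx]
    · unfold neg midx
      by_cases hf : f = a
      · subst hf
        by_cases hc : c.1 = 0
        · rcases l with _ | ⟨d, l⟩ <;> simp [hc, pidx, ofList]
        · simp [hc, pidx]; omega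
      · simp [hf, pidx]
  rw [this]; ring

/-- The length of a state. -/
def Len (σ : St K) : ℕ := ∑ v ∈ Finset.range (K + 3), (cnt σ v).natAbs

theorem len_aux (N N' : ℕ → ℤ) (m v0 : ℕ) (h0 : v0 < m)
    (h : ∀ v < m, N' v = N v + if v = v0 then 1 else 0) :
    (0 ≤ N v0 ∧ ∑ v ∈ Finset.range m, (N' v).natAbs = ∑ v ∈ Finset.range m, (N v).natAbs + 1) ∨
    (N v0 < 0 ∧ ∑ v ∈ Finset.range m, (N v).natAbs = ∑ v ∈ Finset.range m, (N' v).natAbs + 1) := by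
  have hm : v0 ∈ Finset.range m := Finset.mem_range.2 h0
  rw [← Finset.add_sum_erase _ _ hm, ← Finset.add_sum_erase _ (fun v => (N v).natAbs) hm]
  have : ∑ x ∈ (Finset.range m).erase v0, (N' x).natAbs = ∑ x ∈ (Finset.range m).erase v0, (N x).natAbs := by
    apply Finset.sum_congr rfl
    intro v hv
    have hv' := Finset.mem_erase.1 hv
    rw [h v (Finset.mem_range.1 hv'.2), if_neg hv'.1, add_zero]
  rw [this, h v0 h0, if_pos rfl]
  omega

theorem len_pos (a : Bool) (σ : St K) :
    (0 ≤ cnt σ (pidx a σ) ∧ Len (pos a σ) = Len σ + 1) ∨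
    (cnt σ (pidx a σ) < 0 ∧ Len σ = Len (pos a σ) + 1) := by
  have h1 := pidx_le_midx a σ
  have h2 := midx_le a σ
  exact len_aux _ _ (K + 3) _ (by omega) (fun v hv => cnt_pos a σ v (by omega))

theorem len_neg (a : Bool) (σ : St K) :
    (cnt σ (midx a σ) ≤ 0 ∧ Len (neg a σ) = Len σ + 1) ∨
    (0 < cnt σ (midx a σ) ∧ Len σ = Len (neg a σ) + 1) := by
  have h2 := midx_le a σ
  have h3 := len_aux (cnt (neg a σ)) (cnt σ) (K + 3) (midx a σ) (by omega)
    (fun v hv => by rw [cnt_neg a σ v (by omega)]; ring)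
  have h4 := cnt_neg a σ (midx a σ) h2
  rw [if_pos rfl] at h4
  unfold Len
  rcases h3 with ⟨h5, h6⟩ | ⟨h5, h6⟩
  · right; exact ⟨by omega, h6⟩
  · left; exact ⟨by omega, h6⟩

theorem len_zero {σ : St K} (h : Len σ = 0) : σ = (0, none) := by
  have h1 : ∀ v, v < K + 3 → cnt σ v = 0 := by
    intro v hv
    have := (Finset.sum_eq_zero_iff.1 h) v (Finset.mem_range.2 hv)
    omega
  have h2 := h1 0 (by omega)
  have h3 := h1 (K + 2) (by omega)
  rcases σ with ⟨e, _ | ⟨f, c, l⟩⟩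
  · simp [cnt, fac] at h2
    rw [h2]
  · exfalso
    simp only [cnt, fac] at h2 h3
    have h4 : List.countP (fun c : Fin (K + 2) => decide (K + 2 ≤ c.1)) (c :: l) = 0 := by
      rw [List.countP_eq_zero]
      intro x _
      simp
    rw [h4] at h3
    rw [List.countP_cons] at h2
    simp at h2 h3
    omega

theorem len_desc {σ : St K} (h : Len σ ≠ 0) :
    ∃ a, Len (pos a σ) + 1 = Len σ ∨ Len (neg a σ) + 1 = Len σ := by
  rcases σ with ⟨e, _ | ⟨f, c, l⟩⟩
  · refine ⟨true, ?_⟩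
    have h1 := len_pos true ((e, none) : St K)
    have h2 := len_neg true ((e, none) : St K)
    simp only [cnt, fac, List.countP_nil] at h1 h2
    have : e ≠ 0 := by
      rintro rfl
      exact h (by simp [Len, cnt, fac])
    simp at h1 h2
    omega
  · have h1 := len_pos (!f) ((e, some (f, c, l)) : St K)
    have h2 := len_neg f ((e, some (f, c, l)) : St K)
    have h3 : cnt ((e, some (f, c, l)) : St K) (c.1 + 1) + 1 ≤ cnt ((e, some (f, c, l)) : St K) c.1 := by
      simp only [cnt, fac, List.countP_cons]
      have : l.countP (fun d => c.1 + 1 ≤ d.1) ≤ l.countP (fun d => c.1 ≤ d.1) := by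
        apply List.countP_mono_left
        intro x _ hx
        simp at hx ⊢; omega
      simp at this ⊢
      omega
    simp only [pidx, midx, if_pos, if_neg (show ¬ (f = !f) by cases f <;> simp)] at h1 h2
    by_cases h4 : 0 < cnt ((e, some (f, c, l)) : St K) c.1
    · exact ⟨f, .inr (by omega)⟩
    · exact ⟨!f, .inl (by omega)⟩

end FinModel

namespace FinModel
variable {K : ℕ}

/-- The relator. -/
def rels (K : ℕ) : Set (FreeGroup Bool) :=
  {altProd (K + 3) (FreeGroup.of true) (FreeGroup.of false) *
    (altProd (K + 3) (FreeGroup.of false) (FreeGroup.of true))⁻¹}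

/-- The two-generator Artin group. -/
abbrev Grp (K : ℕ) : Type := PresentedGroup (rels K)

/-- Generators. -/
def gn (b : Bool) : Grp K := PresentedGroup.of b

theorem gn_rel : altProd (K + 3) (gn true) (gn false) = (altProd (K + 3) (gn false) (gn true) : Grp K) := by
  have h : PresentedGroup.mk (rels K) (altProd (K + 3) (FreeGroup.of true) (FreeGroup.of false) *
      (altProd (K + 3) (FreeGroup.of false) (FreeGroup.of true))⁻¹) = 1 :=
    PresentedGroup.one_of_mem (rels := rels K) rfl
  rw [map_mul, map_inv, map_altProd, map_altProd, mul_inv_eq_one] at h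
  exact h

theorem univ {H : Type} [Group H] (y : Bool → H)
    (hy : altProd (K + 3) (y true) (y false) = altProd (K + 3) (y false) (y true)) :
    ∃ φ : Grp K →* H, ∀ b, φ (gn b) = y b := by
  have h : ∀ r ∈ rels K, FreeGroup.lift y r = 1 := by
    intro r hr
    rw [Set.mem_singleton_iff.1 hr, map_mul, map_inv, map_altProd, map_altProd, mul_inv_eq_one]
    simpa using hy
  exact ⟨PresentedGroup.toGroup h, fun b => PresentedGroup.toGroup.of h⟩

/-- The action on states. -/
theorem act_exists : ∃ φ : Grp K →* Equiv.Perm (St K), ∀ b, φ (gn b) = pi b := univ pi alt_pi_eq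

/-- The action on states. -/
noncomputable def act : Grp K →* Equiv.Perm (St K) := act_exists.choose

theorem act_gn (b : Bool) : act (K := K) (gn b) = pi b := act_exists.choose_spec b

/-- Action of a letter. -/
def la (x : Bool × Bool) (σ : St K) : St K := if x.2 then pos x.1 σ else neg x.1 σ

theorem act_lev (x : Bool × Bool) (σ : St K) : act (lev gn x) σ = la x σ := by
  rcases x with ⟨b, e⟩
  cases e
  · show act (gn b)⁻¹ σ = neg b σ
    rw [map_inv, act_gn]; rfl
  · show act (gn b) σ = pos b σ
    rw [act_gn]; rfl

/-- The Garside element. -/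
def delta (K : ℕ) : Grp K := altProd (K + 3) (gn true) (gn false)

theorem delta_eq (a : Bool) : altProd (K + 3) (gn a) (gn (!a)) = delta K := by
  cases a
  · exact gn_rel.symm
  · rfl

theorem alt_succ (j : ℕ) (a : Bool) :
    altProd (j + 1) (gn a) (gn (!a)) = altProd j (gn a) (gn (!a)) * (gn (fl j a) : Grp K) := by
  induction j generalizing a with
  | zero => simp [altProd, fl]
  | succ j ih =>
    have := ih (!a)
    rw [Bool.not_not] at this
    rw [altProd, this, altProd, mul_assoc, fl_not]
    rfl

theorem delta_gn (a : Bool) : delta K * gn a = gn (fl (K + 3) a) * delta K := by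
  have h := alt_succ (K := K) (K + 3) (fl (K + 3) a)
  rw [delta_eq, fl_fl, altProd] at h
  have h2 := delta_eq (K := K) (!(fl (K + 3) a))
  rw [Bool.not_not] at h2
  rw [← h, h2]

theorem delta_alt (j : ℕ) (a : Bool) : delta K * altProd j (gn a) (gn (!a)) =
    altProd j (gn (fl (K + 3) a)) (gn (!(fl (K + 3) a))) * delta K := by
  induction j generalizing a with
  | zero => simp [altProd]
  | succ j ih =>
    have := ih (!a)
    rw [Bool.not_not, fl_not, Bool.not_not] at this
    rw [altProd, ← mul_assoc, delta_gn, mul_assoc, this, altProd, mul_assoc]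

/-- Evaluation of factor lists. -/
def evl : Bool → List (Fin (K + 2)) → Grp K
  | _, [] => 1
  | p, d :: l => altProd (d.1 + 1) (gn p) (gn (!p)) * evl (fl d.1 p) l

theorem delta_evl (p : Bool) (l : List (Fin (K + 2))) :
    delta K * evl p l = evl (fl (K + 3) p) l * delta K := by
  induction l generalizing p with
  | nil => simp [evl]
  | cons d l ih =>
    rw [evl, ← mul_assoc, delta_alt, mul_assoc, ih, evl, mul_assoc, ← fl_add, ← fl_add,
      Nat.add_comm d.1 (K + 3)]

/-- Evaluation of states. -/
def ev : St K → Grp K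
  | (e, none) => delta K ^ e
  | (e, some (f, c, l)) => evl f (c :: l) * delta K ^ e

theorem ev_ofList (e : ℤ) (f : Bool) (l : List (Fin (K + 2))) :
    ev (e, ofList f l) = evl f l * delta K ^ e := by
  rcases l with _ | ⟨d, l⟩
  · simp [ofList, ev, evl]
  · rfl

theorem ev_pos (a : Bool) (σ : St K) : ev (pos a σ) = gn a * ev σ := by
  rcases σ with ⟨e, _ | ⟨f, c, l⟩⟩
  · simp [pos, ev, evl, altProd]
  · by_cases hf : f = a
    · subst hf
      simp [pos, ev, evl, altProd, fl, mul_assoc]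
    · have : f = !a := by cases f <;> cases a <;> simp_all
      subst this
      by_cases h : c.1 + 1 < K + 2
      · simp [pos, h, ev, evl, altProd, fl, fl_not, mul_assoc]
      · have hc : c.1 = K + 1 := by have := c.2; omega
        have h1 : pos a (e, some (!a, c, l)) = (e + 1, ofList (!a) l) := by
          simp [pos, h]
        rw [h1, ev_ofList, ev, evl, hc, Bool.not_not, ← mul_assoc, ← mul_assoc]
        have h2 : gn a * altProd (K + 1 + 1) (gn (!a)) (gn a) = delta K := delta_eq a
        have h3 : fl (K + 3) (fl (K + 1) (!a)) = !a := by
          show (!!fl (K + 1) (fl (K + 1) (!a))) = _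
          rw [Bool.not_not, fl_fl]
        rw [h2, delta_evl, h3, mul_assoc, add_comm e 1, zpow_add, zpow_one]

theorem la_t (y : Bool) (σ : St K) : la (y, true) σ = pos y σ := rfl
theorem la_f (y : Bool) (σ : St K) : la (y, false) σ = neg y σ := rfl

theorem ev_la (x : Bool × Bool) (σ : St K) : ev (la x σ) = lev gn x * ev σ := by
  rcases x with ⟨b, e⟩
  cases e
  · show ev (neg b σ) = (gn b)⁻¹ * ev σ
    have := ev_pos b (neg b σ)
    rw [pos_neg] at this
    rw [this]; simp
  · exact ev_pos b σ

theorem exists_word (h : Grp K) : ∃ w : List (Bool × Bool), wev gn w = h := by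
  induction h using PresentedGroup.induction_on with
  | _ z =>
    induction z using FreeGroup.induction_on with
    | C1 => exact ⟨[], by simp⟩
    | of b => exact ⟨[(b, true)], by simp [lev]; rfl⟩
    | inv_of b _ => exact ⟨[(b, false)], by simp [lev]; rfl⟩
    | mul a b ha hb =>
      obtain ⟨u, hu⟩ := ha
      obtain ⟨v, hv⟩ := hb
      exact ⟨u ++ v, by rw [wev_append, hu, hv, map_mul]⟩

theorem ev_act (h : Grp K) (σ : St K) : ev (act h σ) = h * ev σ := by
  obtain ⟨w, rfl⟩ := exists_word h
  induction w with
  | nil => simp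
  | cons x w ih => rw [wev_cons, map_mul, Equiv.Perm.mul_apply, act_lev, ev_la, ih, mul_assoc]

/-- The length function. -/
noncomputable def L (h : Grp K) : ℕ := Len (act h (0, none))

theorem cnt_top (σ : St K) : cnt σ (K + 2) = σ.1 := by
  have : (fac σ).countP (fun c => decide (K + 2 ≤ c.1)) = 0 := by
    rw [List.countP_eq_zero]
    intro x _
    simp
  unfold cnt
  rw [this]; simp

theorem crit1 {e : ℤ} {x : Bool} {c : Fin (K + 2)} {l : List (Fin (K + 2))} (he : e ≤ 0)
    (h : 0 ≤ cnt ((e, some (!x, c, l)) : St K) (c.1 + 1)) (b : Bool) :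
    Len ((e, some (!x, c, l)) : St K) < Len (la (x, b) ((e, some (!x, c, l)) : St K)) := by
  have hx : ¬ ((!x) = x) := by cases x <;> simp
  cases b
  · have := len_neg x ((e, some (!x, c, l)) : St K)
    simp only [midx, if_neg hx, cnt_top] at this
    rw [la_f]
    omega
  · have := len_pos x ((e, some (!x, c, l)) : St K)
    simp only [pidx, if_neg hx] at this
    rw [la_t]
    omega

theorem crit2 {e : ℤ} {x : Bool} {c : Fin (K + 2)} {l : List (Fin (K + 2))}
    (h0 : 0 ≤ cnt ((e, some (x, c, l)) : St K) 0) (h : cnt ((e, some (x, c, l)) : St K) c.1 ≤ 0) (b : Bool) :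
    Len ((e, some (x, c, l)) : St K) < Len (la (x, b) ((e, some (x, c, l)) : St K)) := by
  cases b
  · have := len_neg x ((e, some (x, c, l)) : St K)
    simp only [midx, if_true] at this
    rw [la_f]
    omega
  · have := len_pos x ((e, some (x, c, l)) : St K)
    simp only [pidx, if_true] at this
    rw [la_t]
    omega

theorem neg_ofList (x : Bool) (e : ℤ) (l : List (Fin (K + 2))) :
    neg x (e, ofList (!x) l) = (e - 1, some (!x, Fin.last _, l)) := by
  have hx : ¬ ((!x) = x) := by cases x <;> simp
  rcases l with _ | ⟨d, l⟩ <;> simp [ofList, neg]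

theorem iter_pos (x : Bool) (e : ℤ) (l : List (Fin (K + 2))) (t : ℕ) :
    (pos x)^[t] (e, ofList x l) = (e, ofList x (List.replicate t 0 ++ l)) := by
  induction t with
  | zero => rfl
  | succ t ih => rw [Function.iterate_succ_apply', ih, pos_ofList]; rfl

theorem iter_neg (x : Bool) (e : ℤ) (l : List (Fin (K + 2))) (t : ℕ) :
    (neg x)^[t] (e, ofList (!x) l) = (e - t, ofList (!x) (List.replicate t (Fin.last _) ++ l)) := by
  induction t with
  | zero => simp
  | succ t ih =>
    rw [Function.iterate_succ_apply', ih, neg_ofList]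
    refine Prod.ext ?_ rfl
    push_cast; ring

theorem it_pos (x : Bool) (r : ℕ) :
    (la (x, true))^[r] ((0, none) : St K) = (0, ofList x (List.replicate r 0)) := by
  have := iter_pos (K := K) x 0 [] r
  rw [List.append_nil] at this
  exact this

theorem it_neg (x : Bool) (r : ℕ) : (la (x, false))^[r] ((0, none) : St K) =
    ((0 - r : ℤ), ofList (!x) (List.replicate r (Fin.last _))) := by
  have := iter_neg (K := K) x 0 [] r
  rw [List.append_nil] at this
  exact this

theorem d3_pp (x b : Bool) (t r : ℕ) (σ : St K)
    (hσ : σ = (la (!x, true))^[t + 1] ((la (x, true))^[r] (0, none))) : Len σ < Len (la (x, b) σ) := by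
  have : ∃ c l, σ = ((0, some (!x, c, l)) : St K) := by
    rw [hσ, it_pos, Function.iterate_succ_apply, la_t]
    have : ∃ c l, pos (!x) ((0, ofList x (List.replicate r 0)) : St K) = (0, some (!x, c, l)) := by
      rcases r with _ | r
      · exact ⟨0, [], rfl⟩
      · exact ⟨⟨1, by omega⟩, List.replicate r 0, by simp [List.replicate_succ, ofList, pos]⟩
    obtain ⟨c, l, h⟩ := this
    rw [h]
    have h2 := iter_pos (!x) 0 (c :: l) t
    rcases t with _ | t
    · exact ⟨c, l, rfl⟩
    · exact ⟨_, _, h2⟩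
  obtain ⟨c, l, h⟩ := this
  rw [h]
  refine crit1 le_rfl ?_ b
  have := c.2
  have h3 := cnt_anti ((0, some (!x, c, l)) : St K) (v := c.1 + 1) (v' := K + 2) (by omega)
  rw [cnt_top] at h3
  exact h3

theorem d3_np (x b : Bool) (t r : ℕ) (σ : St K)
    (hσ : σ = (la (!x, false))^[t + 1] ((la (x, true))^[r] (0, none))) : Len σ < Len (la (x, b) σ) := by
  have : σ = (((0 - (t + 1 : ℕ) : ℤ), some (x, Fin.last _, List.replicate t (Fin.last _) ++ List.replicate r 0)) : St K) := by
    have := iter_neg (K := K) (!x) 0 (List.replicate r 0) (t + 1)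
    rw [Bool.not_not] at this
    rw [hσ, it_pos]
    exact this
  rw [this]
  refine crit2 ?_ ?_ b
  · simp [cnt, fac]
    omega
  · simp [cnt, fac, List.countP_append, List.countP_replicate]

theorem d3_pn (x b : Bool) (t r : ℕ) (σ : St K)
    (hσ : σ = (la (!x, true))^[t + 1] ((la (x, false))^[r] (0, none))) : Len σ < Len (la (x, b) σ) := by
  have : σ = (((0 - r : ℤ), some (!x, 0, List.replicate t 0 ++ List.replicate r (Fin.last _))) : St K) := by
    rw [hσ, it_neg]
    exact iter_pos (!x) _ _ _
  rw [this]
  refine crit1 (by omega) ?_ b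
  simp [cnt, fac, List.countP_cons, List.countP_append, List.countP_replicate]

theorem d3_nn (x b : Bool) (t r : ℕ) (σ : St K)
    (hσ : σ = (la (!x, false))^[t + 1] ((la (x, false))^[r + 1] (0, none))) : Len σ < Len (la (x, b) σ) := by
  have : σ = (((0 - (r + 1 : ℕ) : ℤ) - t, ofList x (List.replicate t (Fin.last _) ++
        (⟨K, by omega⟩ :: List.replicate r (Fin.last _)))) : St K) := by
    have := iter_neg (K := K) (!x) (0 - (r + 1 : ℕ)) (⟨K, by omega⟩ :: List.replicate r (Fin.last _)) t
    rw [Bool.not_not] at this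
    have h1 : neg (!x) (((0 - (r + 1 : ℕ) : ℤ), ofList (!x) (List.replicate (r + 1) (Fin.last _))) : St K) =
        ((0 - (r + 1 : ℕ) : ℤ), ofList x (⟨K, by omega⟩ :: List.replicate r (Fin.last _))) := by
      simp [List.replicate_succ, ofList, neg]
    rw [hσ, it_neg, Function.iterate_succ_apply, la_f, h1]
    exact this
  have hc : cnt σ 0 = 0 := by
    rw [this]
    simp [cnt, fac_ofList]
    omega
  have key : ∃ e c l, σ = ((e, some (x, c, l)) : St K) := by
    rcases t with _ | t
    · exact ⟨_, _, _, this⟩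
    · exact ⟨_, _, _, this⟩
  obtain ⟨e, c, l, h⟩ := key
  rw [h] at hc ⊢
  refine crit2 hc.ge ?_ b
  rw [← hc]
  exact cnt_anti _ (Nat.zero_le _)

theorem d3_aux (x b b' bz : Bool) (t r : ℕ) (σ : St K)
    (hσ : σ = (la (!x, bz))^[t + 1] ((la (x, b'))^[r] (0, none))) : Len σ < Len (la (x, b) σ) := by
  cases bz <;> cases b'
  · rcases r with _ | r
    · exact d3_np x b t 0 σ hσ
    · exact d3_nn x b t r σ hσ
  · exact d3_np x b t r σ hσ
  · exact d3_pn x b t r σ hσ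
  · exact d3_pp x b t r σ hσ

theorem act_pow (x : Bool × Bool) (t : ℕ) (σ : St K) : act (lev gn x ^ t) σ = (la x)^[t] σ := by
  induction t with
  | zero => simp
  | succ t ih => rw [pow_succ', map_mul, Equiv.Perm.mul_apply, ih, act_lev, Function.iterate_succ_apply']

theorem L_lev (x : Bool × Bool) (h : Grp K) : L (lev gn x * h) = Len (la x (act h (0, none))) := by
  unfold L
  rw [map_mul, Equiv.Perm.mul_apply, act_lev]

theorem isDih : IsDih s(false, true) (gn (K := K)) L where
  one := by simp [L, Len, cnt, fac]
  zero h hh := by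
    have h1 := ev_act h (0, none)
    rw [len_zero hh] at h1
    simpa [ev] using h1.symm
  step x h _ := by
    rw [L_lev]
    rcases x with ⟨b, e⟩
    cases e
    · show Len (neg b _) = _ ∨ _ = Len (neg b _) + 1
      rcases len_neg b (act h (0, none)) with h1 | h1
      · exact .inl h1.2
      · exact .inr h1.2
    · show Len (pos b _) = _ ∨ _ = Len (pos b _) + 1
      rcases len_pos b (act h (0, none)) with h1 | h1
      · exact .inl h1.2
      · exact .inr h1.2
  desc h hh := by
    obtain ⟨a, h1 | h1⟩ := len_desc hh
    · exact ⟨(a, true), by cases a <;> simp, by rw [L_lev]; exact h1⟩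
    · exact ⟨(a, false), by cases a <;> simp, by rw [L_lev]; exact h1⟩
  d1 x h _ := by
    rw [← lev_linv, L_lev, L_lev]
    rcases x with ⟨b, e⟩
    have h1 := len_neg b (act h (0, none))
    have h2 := len_pos b (act h (0, none))
    have h3 := cnt_anti (act h (0, none)) (pidx_le_midx b (act h (0, none)))
    cases e
    · show Len (neg b _) < Len _ → Len _ < Len (pos b _)
      omega
    · show Len (pos b _) < Len _ → Len _ < Len (neg b _)
      omega
  d3 x x' z _ _ hxz hx' t r ht := by
    rw [L_lev]
    unfold L
    rw [map_mul, Equiv.Perm.mul_apply, act_pow, act_pow]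
    obtain ⟨t, rfl⟩ : ∃ t', t = t' + 1 := ⟨t - 1, by omega⟩
    rcases x with ⟨x, b⟩; rcases x' with ⟨x', b'⟩; rcases z with ⟨z, bz⟩
    simp only at hx' hxz
    subst hx'
    have : z = !x' := by cases z <;> cases x' <;> simp_all
    subst this
    exact d3_aux x' b b' bz t r _ rfl

end FinModel

theorem exists_dih (m : ℕ∞) (hm : 3 ≤ m) : ∃ (D : Type) (_ : Group D) (g : Bool → D) (L : D → ℕ),
    IsDih s(false, true) g L ∧
    (∀ n : ℕ, m = n → altProd n (g true) (g false) = altProd n (g false) (g true)) ∧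
    ∀ (H : Type) [Group H] (h : Bool → H),
      (∀ n : ℕ, m = n → altProd n (h true) (h false) = altProd n (h false) (h true)) →
      ∃ φ : D →* H, ∀ b, φ (g b) = h b := by
  induction m using ENat.recTopCoe with
  | top =>
    refine ⟨FreeGroup Bool, inferInstance, FreeGroup.of, FreeGroup.norm, FreeModel.isDih,
      fun n h => absurd h (by simp), fun H _ h _ => ⟨FreeGroup.lift h, fun b => by simp⟩⟩
  | coe m =>
    have hm' : 3 ≤ m := by exact_mod_cast hm
    obtain ⟨K, rfl⟩ : ∃ K, m = K + 3 := ⟨m - 3, by omega⟩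
    refine ⟨FinModel.Grp K, inferInstance, FinModel.gn, FinModel.L, FinModel.isDih, ?_, ?_⟩
    · intro n hn
      have : K + 3 = n := by exact_mod_cast hn
      subst this
      exact FinModel.gn_rel
    · intro H _ h hh
      exact FinModel.univ h (hh (K + 3) rfl)

theorem dih_pair {n : ℕ} (M : Fin n → Fin n → ℕ∞) (hsymm : ∀ i j, M i j = M j i)
    (hlarge : ∀ i j, i ≠ j → 3 ≤ M i j) (s : Sym2 (Fin n)) :
    ∃ (D : Type) (_ : Group D) (f : Fin n → D) (L : D → ℕ),
    (¬ s.IsDiag → IsDih s f L) ∧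
    (∀ i j, i ≠ j → s = s(i, j) → ∀ k : ℕ, M i j = k → altProd k (f i) (f j) = altProd k (f j) (f i)) ∧
    ∀ (H : Type) [Group H] (x : Fin n → H), ¬ s.IsDiag →
      (∀ i j, i ≠ j → s = s(i, j) → ∀ k : ℕ, M i j = k → altProd k (x i) (x j) = altProd k (x j) (x i)) →
      ∃ φ : D →* H, ∀ i ∈ s, φ (f i) = x i := by
  by_cases hd : s.IsDiag
  · refine ⟨PUnit, inferInstance, fun _ => 1, fun _ => 0, fun h => absurd hd h, ?_, fun H _ x h => absurd hd h⟩
    intro i j hij h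
    subst h
    exact absurd (by simpa using hd) hij
  · induction s using Sym2.inductionOn with
    | _ a b =>
    have hab : a ≠ b := by simpa using hd
    obtain ⟨D, hD, g, L, h1, h2, h3⟩ := exists_dih (M a b) (hlarge a b hab)
    have hmem : ∀ c : Bool, c ∈ s(false, true) := by intro c; cases c <;> simp
    have hda : decide (a = a) = true := by simp
    have hdb : decide (b = a) = false := by simpa using hab.symm
    have hne : ∀ i ∈ s(a, b), ∀ j ∈ s(a, b), i ≠ j → decide (i = a) ≠ decide (j = a) := by
      intro i hi j hj hij
      rcases Sym2.mem_iff.1 hi with rfl | rfl <;> rcases Sym2.mem_iff.1 hj with rfl | rfl <;> simp_all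
    have hlev : ∀ x : Fin n × Bool, lev (fun i => g (decide (i = a))) x = lev g (decide (x.1 = a), x.2) :=
      fun x => rfl
    refine ⟨D, hD, fun i => g (decide (i = a)), L, fun _ => ?_, ?_, ?_⟩
    · refine ⟨h1.one, h1.zero, ?_, ?_, ?_, ?_⟩
      · intro x h _
        exact h1.step (decide (x.1 = a), x.2) h (hmem _)
      · intro h hh
        obtain ⟨⟨c, e⟩, -, hx⟩ := h1.desc h hh
        cases c
        · exact ⟨(b, e), by simp, by rw [hlev, hdb]; exact hx⟩
        · exact ⟨(a, e), by simp, by rw [hlev, hda]; exact hx⟩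
      · intro x h _
        exact h1.d1 (decide (x.1 = a), x.2) h (hmem _)
      · intro x x' z hx hz hxz hx' t r ht
        exact h1.d3 (decide (x.1 = a), x.2) (decide (x'.1 = a), x'.2) (decide (z.1 = a), z.2) (hmem _) (hmem _)
          (hne _ hx _ hz hxz) (by simp only [hx']) t r ht
    · intro i j hij h k hk
      rcases Sym2.eq_iff.1 h with ⟨rfl, rfl⟩ | ⟨rfl, rfl⟩
      · simp only [hda, hdb]
        exact h2 k hk
      · simp only [hda, hdb]
        exact (h2 k (by rw [hsymm, hk])).symm
    · intro H _ x _ hx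
      obtain ⟨φ, hφ⟩ := h3 H (fun c => if c then x a else x b) (fun k hk => by
        simpa using hx a b hab rfl k hk)
      refine ⟨φ, fun i hi => ?_⟩
      rw [hφ]
      rcases Sym2.mem_iff.1 hi with rfl | rfl
      · simp
      · rw [hdb]; simp

/-- Alternating words. -/
def altW {I : Type} : ℕ → I → I → List (I × Bool)
  | 0, _, _ => []
  | k + 1, i, j => (i, true) :: altW k j i

theorem altW_mem {I : Type} (k : ℕ) (i j : I) : ∀ y ∈ altW k i j, y.1 ∈ s(i, j) := by
  induction k generalizing i j with
  | zero => simp [altW]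
  | succ k ih =>
    intro y hy
    rcases List.mem_cons.1 hy with rfl | hy
    · simp
    · rw [Sym2.eq_swap]; exact ih j i y hy

theorem wev_altW {I H : Type} [Group H] (f : I → H) (k : ℕ) (i j : I) :
    wev f (altW k i j) = altProd k (f i) (f j) := by
  induction k generalizing i j with
  | zero => simp [altW, altProd]
  | succ k ih => simp [altW, altProd, ih, lev]

theorem gen_rel (n : ℕ) (M : Fin n → Fin n → ℕ∞) (i j : Fin n) (hij : i ≠ j) (k : ℕ) (hk : M i j = k) :
    altProd k (gen n M i) (gen n M j) = altProd k (gen n M j) (gen n M i) := by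
  have h : PresentedGroup.mk (artinRels n M) (altProd k (FreeGroup.of i) (FreeGroup.of j) *
      (altProd k (FreeGroup.of j) (FreeGroup.of i))⁻¹) = 1 :=
    PresentedGroup.one_of_mem (rels := artinRels n M) ⟨i, j, hij, k, hk, rfl⟩
  rw [map_mul, map_inv, map_altProd, map_altProd, mul_inv_eq_one] at h
  exact h

theorem gen_word (n : ℕ) (M : Fin n → Fin n → ℕ∞) (g : ArtinGroup n M) :
    ∃ w : List (Letter n), wev (gen n M) w = g := by
  induction g using PresentedGroup.induction_on with
  | _ z =>
    induction z using FreeGroup.induction_on with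
    | C1 => exact ⟨[], by simp⟩
    | of b => exact ⟨[(b, true)], by simp [lev]; rfl⟩
    | inv_of b _ => exact ⟨[(b, false)], by simp [lev]; rfl⟩
    | mul a b ha hb =>
      obtain ⟨u, hu⟩ := ha
      obtain ⟨v, hv⟩ := hb
      exact ⟨u ++ v, by rw [wev_append, hu, hv, map_mul]⟩

theorem lev_mem (n : ℕ) (M : Fin n → Fin n → ℕ∞) (x : Letter n) : lev (gen n M) x ∈ genSet n M := by
  rcases x with ⟨i, b⟩
  cases b
  · exact ⟨i, .inr rfl⟩
  · exact ⟨i, .inl rfl⟩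

theorem word_mem (n : ℕ) (M : Fin n → Fin n → ℕ∞) (w : List (Letter n)) :
    ∃ w' : List (ArtinGroup n M), (∀ a ∈ w', a ∈ genSet n M) ∧ w'.length = w.length ∧
      w'.prod = wev (gen n M) w := by
  refine ⟨w.map (lev (gen n M)), ?_, by simp, rfl⟩
  intro a ha
  obtain ⟨x, -, rfl⟩ := List.mem_map.1 ha
  exact lev_mem n M x

theorem list_word (n : ℕ) (M : Fin n → Fin n → ℕ∞) (l : List (ArtinGroup n M))
    (hl : ∀ a ∈ l, a ∈ genSet n M) : ∃ w : List (Letter n), w.length = l.length ∧ wev (gen n M) w = l.prod := by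
  induction l with
  | nil => exact ⟨[], rfl, rfl⟩
  | cons a l ih =>
    obtain ⟨w, h1, h2⟩ := ih (fun b hb => hl b (by simp [hb]))
    obtain ⟨i, h | h⟩ := hl a (by simp)
    · exact ⟨(i, true) :: w, by simp [h1], by simp [h2, h, lev]⟩
    · exact ⟨(i, false) :: w, by simp [h1], by simp [h2, h, lev]⟩

theorem exists_compat (n : ℕ) (M : Fin n → Fin n → ℕ∞) (hsymm : ∀ i j, M i j = M j i)
    (hlarge : ∀ i j, i ≠ j → 3 ≤ M i j) : ∃ P : PS (Fin n), P.Compat (gen n M) (ℓA n M) := by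
  choose D hD f L h1 h2 h3 using dih_pair M hsymm hlarge
  let P : PS (Fin n) := ⟨D, hD, f, L, h1⟩
  refine ⟨P, ?_, ?_, ?_, ?_⟩
  · intro s hs
    exact h3 s (ArtinGroup n M) (gen n M) hs (fun i j hij _ k hk => gen_rel n M i j hij k hk)
  · have h : ∀ r ∈ artinRels n M, FreeGroup.lift (PS.pg (P := P)) r = 1 := by
      rintro r ⟨i, j, hij, k, hk, rfl⟩
      rw [map_mul, map_inv, map_altProd, map_altProd, mul_inv_eq_one, FreeGroup.lift_apply_of,
        FreeGroup.lift_apply_of, ← wev_altW, ← wev_altW]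
      refine PS.wev_pg_eq (s := s(i, j)) (PS.nd hij) _ _ (altW_mem _ _ _) ?_ ?_
      · rw [Sym2.eq_swap]; exact altW_mem _ _ _
      · rw [wev_altW, wev_altW]
        exact h2 s(i, j) i j hij rfl k hk
    exact ⟨PresentedGroup.toGroup h, fun i => PresentedGroup.toGroup.of h⟩
  · intro w
    exact Nat.sInf_le (word_mem n M w)
  · intro g
    obtain ⟨w, hw⟩ := gen_word n M g
    have : (ℓA n M g) ∈ {N : ℕ | ∃ w : List (ArtinGroup n M), (∀ a ∈ w, a ∈ genSet n M) ∧ w.length = N ∧ w.prod = g} := by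
      apply Nat.sInf_mem
      obtain ⟨w', a, b, c⟩ := word_mem n M w
      exact ⟨_, w', a, b, c.trans hw⟩
    obtain ⟨l, a, b, c⟩ := this
    obtain ⟨w', d, e⟩ := list_word n M l a
    exact ⟨w', by rw [e, c], by rw [d, b]⟩

namespace PS
section fin
variable {I : Type} {P : PS I} {s : Sym2 I} {G : Type} [Group G] {x : I → G} {l : G → ℕ}

theorem l_mul (hc : Compat P x l) (a b : G) : l (a * b) ≤ l a + l b := by
  obtain ⟨u, h1, h2⟩ := hc.ex a
  obtain ⟨v, h3, h4⟩ := hc.ex b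
  have := hc.le (u ++ v)
  rw [wev_append, h1, h3, List.length_append, h2, h4] at this
  exact this

theorem wev_rev (w : List (I × Bool)) : wev x (w.reverse.map linv) = (wev x w)⁻¹ := by
  induction w with
  | nil => simp
  | cons a w ih =>
    rw [List.reverse_cons, List.map_append, wev_append, ih]
    simp

theorem l_inv (hc : Compat P x l) (a : G) : l a⁻¹ = l a := by
  have key : ∀ a, l a⁻¹ ≤ l a := by
    intro a
    obtain ⟨u, h1, h2⟩ := hc.ex a
    have := hc.le (u.reverse.map linv)
    rw [wev_rev, h1] at this
    simpa [h2] using this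
  refine le_antisymm (key a) ?_
  have := key a⁻¹
  rwa [inv_inv] at this

theorem l_split (hc : Compat P x l) {u v : List (I × Bool)} (h : P.Red (u ++ v)) :
    l (wev x u) = u.length ∧ l (wev x v) = v.length := by
  have h1 := l_red hc h
  have h2 := l_mul hc (wev x u) (wev x v)
  have h3 := hc.le u
  have h4 := hc.le v
  rw [wev_append, List.length_append] at h1
  omega

theorem sub_word {i j : I} {h : G} (hh : h ∈ Subgroup.closure {x i, x j}) :
    ∃ u : List (I × Bool), (∀ y ∈ u, y.1 ∈ s(i, j)) ∧ wev x u = h := by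
  induction hh using Subgroup.closure_induction with
  | mem y hy =>
    rcases hy with rfl | hy
    · exact ⟨[(i, true)], by simp, by simp [lev]⟩
    · rw [Set.mem_singleton_iff.1 hy]
      exact ⟨[(j, true)], by simp, by simp [lev]⟩
  | one => exact ⟨[], by simp, rfl⟩
  | mul a b _ _ ha hb =>
    obtain ⟨u, h1, h2⟩ := ha
    obtain ⟨v, h3, h4⟩ := hb
    refine ⟨u ++ v, ?_, by rw [wev_append, h2, h4]⟩
    intro y hy
    rcases List.mem_append.1 hy with hy | hy
    · exact h1 y hy
    · exact h3 y hy
  | inv a _ ha =>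
    obtain ⟨u, h1, h2⟩ := ha
    refine ⟨u.reverse.map linv, ?_, by rw [wev_rev, h2]⟩
    intro y hy
    obtain ⟨z, hz, rfl⟩ := List.mem_map.1 hy
    exact h1 z (List.mem_reverse.1 hz)

theorem word_sub {i j : I} {u : List (I × Bool)} (hu : ∀ y ∈ u, y.1 ∈ s(i, j)) :
    wev x u ∈ Subgroup.closure {x i, x j} := by
  induction u with
  | nil => exact one_mem _
  | cons a u ih =>
    rw [wev_cons]
    refine mul_mem ?_ (ih (fun y hy => hu y (by simp [hy])))
    have h1 : x a.1 ∈ Subgroup.closure {x i, x j} := by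
      apply Subgroup.subset_closure
      rcases Sym2.mem_iff.1 (hu a (by simp)) with h | h <;> simp [h]
    unfold lev
    split
    · exact h1
    · exact inv_mem h1

/-- The main statement about left divisors. -/
theorem maxLD (hc : Compat P x l) {i j : I} (hij : i ≠ j) (g : G) :
    ∃ h, h ∈ Subgroup.closure {x i, x j} ∧ IsLeftDiv l h g ∧
      (∀ h' ∈ Subgroup.closure {x i, x j}, IsLeftDiv l h' g → l h' ≤ l h ∧ (l h' = l h → h' = h)) ∧
      ∀ u' v' : List (I × Bool), (∀ y ∈ u', y.1 ∈ s(i, j)) → P.Red (u' ++ v') → wev x (u' ++ v') = g →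
        (∀ y t, v' = y :: t → y.1 ∉ s(i, j)) →
        ∃ a : I × Bool, a.1 ∈ s(i, j) ∧ ∃ r : ℕ, h = wev x u' * lev x a ^ r ∧ l h = l (wev x u') + r := by
  have hs := nd hij
  obtain ⟨u, w0, h1, h2, h3, h4⟩ := decomp hc hs g
  obtain ⟨e1, e2⟩ := l_split hc h3
  refine ⟨wev x u, word_sub h1.1, ?_, ?_, ?_⟩
  · unfold IsLeftDiv
    have : (wev x u)⁻¹ * g = wev x w0 := by rw [← h2, wev_append]; simp
    rw [this, e1, e2, ← h2, l_red hc h3, List.length_append]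
  · intro h' hh' hd
    obtain ⟨u0, a1, a2⟩ := sub_word hh'
    obtain ⟨u', b1, b2⟩ := exists_geo hs (wev (P.f s(i, j)) u0)
    have b3 : wev x u' = h' := by rw [← a2]; exact wev_eq_of_D hc hs b1.1 a1 b2
    have b4 : l h' = u'.length := by rw [← b3]; exact l_red hc (red_geo hs b1)
    obtain ⟨v', c1, c2⟩ := hc.ex (h'⁻¹ * g)
    have c3 : wev x (u' ++ v') = g := by rw [wev_append, b3, c1]; simp
    have c4 : P.Red (u' ++ v') := by
      apply red_of_l hc
      rw [c3, ← hd, List.length_append, c2, b4]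
    obtain ⟨k, u'', d1, d2, d3, d4, d5⟩ := h4 u' v' b1.1 c4 c3
    refine ⟨by omega, fun he => ?_⟩
    have : u'' = [] := List.length_eq_zero_iff.1 (by omega)
    rw [this, b3] at d5
    simpa using d5.symm
  · intro u' v' a1 a2 a3 a4
    obtain ⟨k, u'', d1, d2, d3, d4, d5⟩ := h4 u' v' a1 a2 a3
    have e3 := (l_split hc a2).1
    rw [d5.symm.symm, ← d5, e1, e3, d5]
    rcases v' with _ | ⟨y, t⟩
    · obtain ⟨u1, f1, f2, f3, -⟩ := d3
      have f4 : u1 = [] := List.length_eq_zero_iff.1 (by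
        have := f3.length
        rw [List.length_append, List.length_nil] at this
        omega)
      subst f4
      have f5 : u'' = [] := by
        apply List.length_eq_zero_iff.1
        rw [← d1.2, d2, ← f2]
        exact (P.ax _ hs).one
      subst f5
      exact ⟨(i, true), by simp, 0, by simp, by simpa using d4⟩
    · have hy := a4 y t rfl
      rw [Sym2.mem_iff, not_or] at hy
      obtain ⟨a, r, f1, f2, f3⟩ := gate_pow (c := y.1) (γ := y.2) hij hy.1 hy.2 (red_suffix a2)
        ⟨t, .refl _⟩ d3
      refine ⟨a, f1, r, ?_, ?_⟩
      · rw [← wev_replicate]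
        congr 1
        exact wev_eq_of_D hc hs d1.1 f2.1 (by rw [d2, f3, wev_replicate])
      · have h5 := f2.2
        rw [wev_replicate, ← f3, ← d2, d1.2, List.length_replicate] at h5
        omega

end fin
end PS

theorem isMaxRD_iff {n : ℕ} {M : Fin n → Fin n → ℕ∞} (hl : ∀ a, ℓA n M a⁻¹ = ℓA n M a) (i j : Fin n)
    (g h : ArtinGroup n M) : IsMaxRD n M i j g h ↔ IsMaxLD n M i j g⁻¹ h⁻¹ := by
  have key : ∀ h, IsRightDiv (ℓA n M) h g ↔ IsLeftDiv (ℓA n M) h⁻¹ g⁻¹ := by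
    intro h
    unfold IsRightDiv IsLeftDiv
    rw [hl h, hl g, show h⁻¹⁻¹ * g⁻¹ = (g * h⁻¹)⁻¹ by simp, hl, add_comm]
  unfold IsMaxRD IsMaxLD
  rw [key, inv_mem_iff]
  refine and_congr_right fun _ => and_congr_right fun _ => ?_
  constructor
  · intro H h' hh' hd
    have := H h'⁻¹ (inv_mem hh') (by rw [key, inv_inv]; exact hd)
    rwa [hl] at this ⊢
  · intro H h' hh' hd
    have := H h'⁻¹ (inv_mem hh') ((key h').1 hd)
    rwa [hl, hl] at this

/-- **Proposition.** In an Artin group of large type, every element `g` has a unique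
left divisor of maximal length in `G(i,j)`, and a unique right divisor of maximal
length in `G(i,j)`; moreover the maximal left divisor is obtained from the maximal
`{x_i,x_j}`-prefix of any geodesic representative of `g` by appending a power of a
single letter. -/
theorem maximal_two_generator_divisors
    (n : ℕ) (hn : 2 ≤ n) (M : Fin n → Fin n → ℕ∞)
    (hsymm : ∀ i j, M i j = M j i)
    (hdiag : ∀ i, M i i = 1)
    (hlarge : ∀ i j, i ≠ j → 3 ≤ M i j)
    (g : ArtinGroup n M) (i j : Fin n) (hij : i ≠ j) :
    (∃! h : ArtinGroup n M, IsMaxLD n M i j g h) ∧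
    (∃! h : ArtinGroup n M, IsMaxRD n M i j g h) ∧
    (∀ h : ArtinGroup n M, IsMaxLD n M i j g h →
      ∀ w : List (Letter n), IsGeodesic n M w → wordElt n M w = g →
        ∃ a ∈ lettersIJ n M i j, ∃ r : ℕ,
          h = wordElt n M (ijPrefix n i j w) * a ^ r ∧
          ℓA n M h = ℓA n M (wordElt n M (ijPrefix n i j w)) + r) := by
  obtain ⟨P, hc⟩ := exists_compat n M hsymm hlarge
  have uniq : ∀ g, ∃! h : ArtinGroup n M, IsMaxLD n M i j g h := by
    intro g
    obtain ⟨h, h1, h2, h3, -⟩ := PS.maxLD hc hij g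
    refine ⟨h, ⟨h1, h2, fun h' a b => (h3 h' a b).1⟩, ?_⟩
    rintro h' ⟨a, b, c⟩
    exact (h3 h' a b).2 (le_antisymm (h3 h' a b).1 (c h h1 h2))
  refine ⟨uniq g, ?_, ?_⟩
  · have hiff := isMaxRD_iff (PS.l_inv hc) i j g
    obtain ⟨h, h1, h2⟩ := uniq g⁻¹
    refine ⟨h⁻¹, (hiff _).2 (by rw [inv_inv]; exact h1), ?_⟩
    intro h' hh'
    rw [← h2 h'⁻¹ ((hiff h').1 hh'), inv_inv]
  · intro h hh w hw hg
    obtain ⟨h0, h1, h2, h3, h4⟩ := PS.maxLD hc hij g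
    have : h = h0 := by
      obtain ⟨a, b, c⟩ := hh
      exact (h3 h a b).2 (le_antisymm (h3 h a b).1 (c h0 h1 h2))
    subst this
    have hr : P.Red w := PS.red_of_l hc hw
    have hsplit : ijPrefix n i j w ++ w.dropWhile (fun l => l.1 == i || l.1 == j) = w :=
      List.takeWhile_append_dropWhile
    obtain ⟨a, ha, r, e1, e2⟩ := h4 (ijPrefix n i j w) (w.dropWhile (fun l => l.1 == i || l.1 == j))
      (fun y hy => by
        have := List.mem_takeWhile_imp hy
        simpa [Sym2.mem_iff] using this)
      (by rw [hsplit]; exact hr) (by rw [hsplit]; exact hg)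
      (fun y t hyt => by
        have hne : w.dropWhile (fun l => l.1 == i || l.1 == j) ≠ [] := by rw [hyt]; simp
        have := List.head_dropWhile_not (fun l : Letter n => l.1 == i || l.1 == j) hne
        simp only [hyt, List.head_cons] at this
        simpa [Sym2.mem_iff] using this)
    refine ⟨lev (gen n M) a, ?_, r, e1, e2⟩
    rcases a with ⟨c, b⟩
    rcases Sym2.mem_iff.1 ha with h | h <;> simp only at h <;> subst h <;> cases b <;>
      simp [lev, lettersIJ]

end ArtinRD
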